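/- arXiv:1103.0039 — 8 statements merged into one kernel-verified Lean document; each statement's English description precedes it below -/
import Mathlib

section
/- For every integer n > 2 and every integer t ≥ 0, the number of n×n integer matrices lying in the dilation tP(C_n) equals the binomial coefficient C(t+n−1, n−1). -/
/-!
The permutation matrices of the powers of the `n`-cycle are the circulant matrices of the standard
basis vectors, so `P(C_n)` is the image of the standard simplex of `ℝⁿ` under the injective linear
map `cyclicMap`
sending `w` to the circulant matrix `(w (j - i))_{ij}` (`permPolytope_finRotate`). The first row of
such a matrix is `w` itself, so the integer matrices in `t • P(C_n)` correspond to the vectors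
`w ∈ ℕⁿ` with coordinate sum `t` (`setOf_integer_eq`), and stars and bars counts these.
-/

open Pointwise

/-- The permutation matrix of a permutation `g` of `Fin n`:
`M(g)_{ij} = 1` if `g i = j` and `0` otherwise. -/
noncomputable def permMatrix (n : ℕ) (g : Equiv.Perm (Fin n)) :
    Matrix (Fin n) (Fin n) ℝ :=
  Matrix.of fun i j => if g i = j then (1 : ℝ) else 0

/-- The permutation polytope of a set of permutations: the convex hull of their
permutation matrices. -/
noncomputable def permPolytope (n : ℕ) (G : Set (Equiv.Perm (Fin n))) :
    Set (Matrix (Fin n) (Fin n) ℝ) :=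
  convexHull ℝ (permMatrix n '' G)

/-- A real matrix all of whose entries are integers. -/
def IsIntegerMatrix {ι κ : Type*} (X : Matrix ι κ ℝ) : Prop :=
  ∀ i j, ∃ z : ℤ, X i j = (z : ℝ)

/-- `latticePointCount P t` is the number of integer matrices in the dilation `t • P`. -/
noncomputable def latticePointCount {ι : Type*} (P : Set (Matrix ι ι ℝ)) (t : ℕ) : ℕ :=
  {X : Matrix ι ι ℝ | X ∈ (t : ℝ) • P ∧ IsIntegerMatrix X}.ncard

/-- The linear map sending a vector `w` to the circulant matrix with first row `w`, that is, with
entry `w (j - i)` in position `(i, j)`. -/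
def cyclicMap (n : ℕ) : (Fin n → ℝ) →ₗ[ℝ] Matrix (Fin n) (Fin n) ℝ where
  toFun w := Matrix.of fun i j => w (j - i)
  map_add' _ _ := rfl
  map_smul' _ _ := rfl

lemma cyclicMap_apply (n : ℕ) (w : Fin n → ℝ) (i j : Fin n) : cyclicMap n w i j = w (j - i) := rfl

lemma cyclicMap_injective (n : ℕ) [NeZero n] : Function.Injective (cyclicMap n) := by
  intro v w h
  ext k
  simpa [cyclicMap_apply] using congrFun (congrFun h 0) k

lemma finRotate_pow (n : ℕ) [NeZero n] (k : ℕ) :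
    finRotate n ^ k = Equiv.addRight (Fin.ofNat n k) := by
  induction k with
  | zero => ext i; simp
  | succ k ih =>
    ext i
    rw [pow_succ', ih, Equiv.Perm.mul_apply, finRotate_apply]
    simp [Fin.val_add, ← add_assoc]

lemma permMatrix_addRight (n : ℕ) [NeZero n] (k : Fin n) :
    permMatrix n (Equiv.addRight k) = cyclicMap n (Pi.single k 1) := by
  ext i j
  simp only [permMatrix, cyclicMap_apply, Matrix.of_apply, Equiv.coe_addRight, Pi.single_apply]
  exact if_congr (by rw [sub_eq_iff_eq_add', eq_comm]) rfl rfl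

lemma permPolytope_finRotate (n : ℕ) [NeZero n] :
    permPolytope n ((Subgroup.zpowers (finRotate n) : Subgroup (Equiv.Perm (Fin n))) :
      Set (Equiv.Perm (Fin n))) = cyclicMap n '' stdSimplex ℝ (Fin n) := by
  rw [permPolytope, ← convexHull_rangle_single_eq_stdSimplex, LinearMap.image_convexHull,
    ← Set.range_comp]
  congr 1
  ext X
  constructor
  · rintro ⟨g, hg, rfl⟩
    -- In a finite group natural-number exponents suffice.
    obtain ⟨k, rfl⟩ := mem_powers_iff_mem_zpowers.2 hg
    exact ⟨Fin.ofNat n k, by simp only [finRotate_pow, permMatrix_addRight]; rfl⟩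
  · rintro ⟨k, rfl⟩
    refine ⟨Equiv.addRight k, mem_powers_iff_mem_zpowers.1 ⟨k.val, ?_⟩, permMatrix_addRight n k⟩
    simp only [finRotate_pow]
    congr 1
    exact Fin.ext (Nat.mod_eq_of_lt k.isLt)

lemma setOf_integer_eq (n : ℕ) [NeZero n] (t : ℕ) :
    {X : Matrix (Fin n) (Fin n) ℝ |
        X ∈ (t : ℝ) • (cyclicMap n '' stdSimplex ℝ (Fin n)) ∧ IsIntegerMatrix X}
      = (fun c : Fin n →₀ ℕ => cyclicMap n fun k => (c k : ℝ)) ''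
          (Finset.finsuppAntidiag (Finset.univ : Finset (Fin n)) t : Set (Fin n →₀ ℕ)) := by
  ext X
  constructor
  · rintro ⟨⟨_, ⟨w, ⟨hw0, hw1⟩, rfl⟩, rfl⟩, hX⟩
    have hc : ∀ k, ∃ c : ℕ, (t : ℝ) * w k = c := by
      intro k
      obtain ⟨z, hz⟩ := hX 0 k
      have hz' : (t : ℝ) * w k = z := by simpa [cyclicMap_apply] using hz
      have hz0 : 0 ≤ z := by
        have : (0 : ℝ) ≤ z := hz' ▸ mul_nonneg (Nat.cast_nonneg t) (hw0 k)
        exact_mod_cast this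
      lift z to ℕ using hz0
      exact ⟨z, by simpa using hz'⟩
    choose c hc using hc
    refine ⟨Finsupp.equivFunOnFinite.symm c, ?_, ?_⟩
    · have : (∑ k, (c k : ℝ)) = t := by
        simp_rw [← hc, ← Finset.mul_sum, hw1, mul_one]
      simpa [Finset.mem_finsuppAntidiag] using (by exact_mod_cast this : ∑ k, c k = t)
    · ext i j
      simp [cyclicMap_apply, hc]
  · rintro ⟨c, hc, rfl⟩
    have hs : ∑ k, c k = t := by simpa [Finset.mem_finsuppAntidiag] using hc
    have hs' : ∑ k, (c k : ℝ) = t := by exact_mod_cast hs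
    refine ⟨?_, fun i j => ⟨c (j - i), by simp [cyclicMap_apply]⟩⟩
    rcases Nat.eq_zero_or_pos t with rfl | ht
    -- Division by `t` is impossible for `t = 0`; then `c = 0`, and any point of the simplex will do.
    · have h0 : ∀ k, c k = 0 := by simpa using hs
      refine ⟨cyclicMap n (Pi.single 0 1), ⟨_, single_mem_stdSimplex ℝ 0, rfl⟩, ?_⟩
      ext i j
      simp [cyclicMap_apply, h0]
    · have ht' : (t : ℝ) ≠ 0 := by positivity
      refine ⟨_, ⟨fun k => (c k : ℝ) / t, ⟨fun k => by positivity, ?_⟩, rfl⟩, ?_⟩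
      · rw [← Finset.sum_div, hs', div_self ht']
      · ext i j
        simp [cyclicMap_apply, mul_div_cancel₀ _ ht']

/-- The number of integer points in `t • P(C_n)` is `C(t+n-1, n-1)`. -/
theorem ehrhart_cyclic (n : ℕ) (hn : 2 < n) (t : ℕ) :
    latticePointCount
        (permPolytope n ((Subgroup.zpowers (finRotate n) : Subgroup (Equiv.Perm (Fin n))) :
          Set (Equiv.Perm (Fin n)))) t
      = Nat.choose (t + n - 1) (n - 1) := by
  have : NeZero n := ⟨by omega⟩
  rw [latticePointCount, permPolytope_finRotate, setOf_integer_eq, Set.ncard_image_of_injective,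
    Set.ncard_coe_finset, Finset.card_finsuppAntidiag_nat_eq_choose, Finset.card_univ,
    Fintype.card_fin, add_comm n t]
  · exact Nat.choose_symm_of_eq_add (by omega)
  · intro c d h
    ext k
    exact_mod_cast congrFun (cyclicMap_injective n h) k
end

section
/- For every odd integer n > 2 and every integer t ≥ 1, the number of n×n integer matrices lying in tP(D_n) equals Σ_{k=0}^{2n−2} (C(2n, k+1) − C(n, k+1−n)) · C(t−1, k). -/
/-!
Index rows and columns by `ℤ/n`. The rotation `r ^ k` has its ones where `j - i = k`, and each
reflection has its ones where `i + j` is some constant. So the matrices in `t • P(D_n)` are exactly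
those of the form `X i j = a (j - i) + b (i + j)` with `a, b ≥ 0` of total sum `t`
(`mem_smul_permPolytope`).

For odd `n`, the pair `(j - i, i + j)` takes every value (`exists_sub_add_eq`), so `X` determines
all the sums `a u + b v`, that is, `(a, b)` up to moving a constant from `a` to `b`. Normalizing by
`min a = 0` makes `(a, b)` unique, and then `X` is an integer matrix exactly when all the weights
are natural numbers (`dihedralSum_injOn`, `latticePoints_eq_image`).

The normalized weights are counted by stars and bars: all weights of total `t`, minus those with
`a ≥ 1` everywhere, which gives `C(2n + t - 1, 2n - 1) - C(n + t - 1, 2n - 1)`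
(`card_normalizedWeights`). Vandermonde's identity (`sum_chooseZ`) expands both terms.
-/

open Pointwise

/-- The dihedral group of permutations of `Fin n`, generated by the rotation
`finRotate n : i ↦ i + 1 (mod n)` and the reflection `Fin.revPerm : i ↦ n - 1 - i`:
it consists of the rotations `r^k` and the reflections `f * r^k`. -/
def dihedralSet (n : ℕ) : Set (Equiv.Perm (Fin n)) :=
  {g | ∃ k : ℕ, g = (finRotate n) ^ k ∨ g = Fin.revPerm * (finRotate n) ^ k}

/-- The binomial coefficient `C(a, b)` with integer lower index, interpreted as `0`
when `b < 0`. -/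
def chooseZ (a : ℕ) (b : ℤ) : ℤ :=
  if 0 ≤ b then (a.choose b.toNat : ℤ) else 0

/-! ### The dihedral permutation polytope -/

/-- The matrix `X` with `X i j = a (j - i) + b (i + j)`, where `a` and `b` are the two halves
of `c`. On indicator functions it gives the permutation matrices of the rotations (left summand)
and of the reflections (right summand), both indexed by `Fin n` with its cyclic addition. -/
def dihedralSum {n : ℕ} [NeZero n] (c : Fin n ⊕ Fin n → ℝ) : Matrix (Fin n) (Fin n) ℝ :=
  Matrix.of fun i j => c (Sum.inl (j - i)) + c (Sum.inr (i + j))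

theorem finRotate_pow_apply {n : ℕ} [NeZero n] (k : ℕ) (i : Fin n) :
    (finRotate n ^ k) i = i + k • (1 : Fin n) := by
  induction k with
  | zero => simp
  | succ k ih => rw [pow_succ', Equiv.Perm.mul_apply, ih, finRotate_apply, succ_nsmul, add_assoc]

theorem exists_nsmul_one {n : ℕ} [NeZero n] (u : Fin n) : ∃ k : ℕ, k • (1 : Fin n) = u := by
  refine ⟨u, ?_⟩
  open Fin.CommRing in rw [nsmul_one, Fin.cast_val_eq_self]

theorem rev_eq_last_sub {n : ℕ} [NeZero n] : ∃ l : Fin n, ∀ i : Fin n, Fin.rev i = l - i := by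
  obtain ⟨m, rfl⟩ := Nat.exists_eq_succ_of_ne_zero (NeZero.ne n)
  exact ⟨Fin.last m, fun i => (Fin.last_sub i).symm⟩

theorem permMatrix_image_dihedralSet {n : ℕ} [NeZero n] :
    permMatrix n '' dihedralSet n
      = Set.range fun x : Fin n ⊕ Fin n => dihedralSum (Pi.single x (1 : ℝ)) := by
  obtain ⟨l, hl⟩ := rev_eq_last_sub (n := n)
  have hrot : ∀ k : ℕ, permMatrix n (finRotate n ^ k)
      = dihedralSum (Pi.single (Sum.inl (k • (1 : Fin n))) (1 : ℝ)) := by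
    intro k
    ext i j
    simp only [permMatrix, dihedralSum, Matrix.of_apply, finRotate_pow_apply, Pi.single_apply,
      Sum.inl.injEq, reduceCtorEq, if_false, add_zero, sub_eq_iff_eq_add']
    exact if_congr eq_comm rfl rfl
  have href : ∀ k : ℕ, permMatrix n (Fin.revPerm * finRotate n ^ k)
      = dihedralSum (Pi.single (Sum.inr (l - k • (1 : Fin n))) (1 : ℝ)) := by
    intro k
    ext i j
    simp only [permMatrix, dihedralSum, Matrix.of_apply, Equiv.Perm.mul_apply, Fin.revPerm_apply,
      finRotate_pow_apply, hl, Pi.single_apply, Sum.inr.injEq, reduceCtorEq, if_false, zero_add]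
    refine if_congr ?_ rfl rfl
    rw [sub_eq_iff_eq_add, eq_sub_iff_add_eq, eq_comm]
    rw [show j + (i + k • (1 : Fin n)) = i + j + k • (1 : Fin n) by abel]
  ext X
  constructor
  · rintro ⟨g, ⟨k, rfl | rfl⟩, rfl⟩
    · exact ⟨_, (hrot k).symm⟩
    · exact ⟨_, (href k).symm⟩
  · rintro ⟨u | v, rfl⟩
    · obtain ⟨k, rfl⟩ := exists_nsmul_one u
      exact ⟨_, ⟨k, Or.inl rfl⟩, hrot k⟩
    · obtain ⟨k, hk⟩ := exists_nsmul_one (l - v)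
      refine ⟨_, ⟨k, Or.inr rfl⟩, ?_⟩
      rw [href k, hk, sub_sub_cancel]

theorem permPolytope_dihedralSet {n : ℕ} [NeZero n] :
    permPolytope n (dihedralSet n) = dihedralSum '' stdSimplex ℝ (Fin n ⊕ Fin n) := by
  let L : (Fin n ⊕ Fin n → ℝ) →ₗ[ℝ] Matrix (Fin n) (Fin n) ℝ :=
    { toFun := dihedralSum
      map_add' := by
        intro c d; ext i j; simp only [dihedralSum, Matrix.of_apply, Matrix.add_apply,
          Pi.add_apply]; ring
      map_smul' := by
        intro r c; ext i j; simp only [dihedralSum, Matrix.of_apply, Matrix.smul_apply,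
          Pi.smul_apply, smul_eq_mul, RingHom.id_apply]; ring }
  rw [permPolytope, permMatrix_image_dihedralSet, ← convexHull_rangle_single_eq_stdSimplex]
  change _ = L '' _
  rw [LinearMap.image_convexHull, ← Set.range_comp]
  rfl

/-! ### Integer matrices and normalized weights -/

/-- Doubling is onto in a cyclic group of odd order, so the row and column of a matrix entry can
be recovered from their difference and their sum. -/
theorem exists_sub_add_eq {n : ℕ} [NeZero n] (hodd : Odd n) (u v : Fin n) :
    ∃ i j : Fin n, j - i = u ∧ i + j = v := by
  obtain ⟨p, hp⟩ := hodd
  have h : (2 * p + 1) • (v - u) = 0 := by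
    have := card_nsmul_eq_zero' (x := v - u)
    rw [Nat.card_eq_fintype_card, Fintype.card_fin] at this
    exact (congrArg (fun k => k • (v - u)) hp).symm.trans this
  refine ⟨(p + 1) • (v - u), (p + 1) • (v - u) + u, by abel, ?_⟩
  rw [← add_assoc, ← add_nsmul, show p + 1 + (p + 1) = 2 * p + 1 + 1 by ring, succ_nsmul, h,
    zero_add, sub_add_cancel]

theorem mem_smul_permPolytope {n : ℕ} [NeZero n] {t : ℕ} (ht : 1 ≤ t)
    (X : Matrix (Fin n) (Fin n) ℝ) :
    X ∈ (t : ℝ) • permPolytope n (dihedralSet n) ↔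
      ∃ w : Fin n ⊕ Fin n → ℝ, (∀ x, 0 ≤ w x) ∧ ∑ x, w x = t ∧ dihedralSum w = X := by
  have ht' : (0 : ℝ) < t := by exact_mod_cast ht
  have hsm : ∀ (r : ℝ) (c : Fin n ⊕ Fin n → ℝ), r • dihedralSum c = dihedralSum (r • c) := by
    intro r c
    ext i j
    simp only [dihedralSum, Matrix.of_apply, Matrix.smul_apply, Pi.smul_apply, smul_eq_mul]
    ring
  rw [permPolytope_dihedralSet, Set.mem_smul_set]
  constructor
  · rintro ⟨_, ⟨w, ⟨hw0, hw1⟩, rfl⟩, rfl⟩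
    refine ⟨(t : ℝ) • w, fun x => mul_nonneg ht'.le (hw0 x), ?_, (hsm _ _).symm⟩
    simp only [Pi.smul_apply, smul_eq_mul, ← Finset.mul_sum, hw1, mul_one]
  · rintro ⟨w, hw0, hw1, rfl⟩
    refine ⟨_, ⟨(t : ℝ)⁻¹ • w, ⟨fun x => mul_nonneg (inv_nonneg.2 ht'.le) (hw0 x), ?_⟩, rfl⟩, ?_⟩
    · simp only [Pi.smul_apply, smul_eq_mul, ← Finset.mul_sum, hw1, inv_mul_cancel₀ ht'.ne']
    · rw [hsm, smul_inv_smul₀ ht'.ne']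

/-- The normalized integer weights of total `t`: at least one rotation has weight `0`. -/
def normalizedWeights (n t : ℕ) : Finset (Fin n ⊕ Fin n → ℕ) :=
  {c ∈ Finset.piAntidiag Finset.univ t | ∃ u, c (Sum.inl u) = 0}

theorem mem_normalizedWeights {n t : ℕ} {c : Fin n ⊕ Fin n → ℕ} :
    c ∈ normalizedWeights n t ↔ ∑ x, c x = t ∧ ∃ u, c (Sum.inl u) = 0 := by
  simp [normalizedWeights]

/-- Distinct normalized weights give distinct matrices: a zero weight on the rotation `u` exposes
all the reflection weights, since the entries with difference `u` are exactly these. -/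
theorem dihedralSum_injOn {n : ℕ} [NeZero n] (hodd : Odd n) (t : ℕ) :
    Set.InjOn (fun c : Fin n ⊕ Fin n → ℕ => dihedralSum fun x => (c x : ℝ))
      (normalizedWeights n t) := by
  intro c hc d hd h
  obtain ⟨-, u₀, hu₀⟩ := mem_normalizedWeights.1 hc
  obtain ⟨-, u₁, hu₁⟩ := mem_normalizedWeights.1 hd
  have key : ∀ u v, c (Sum.inl u) + c (Sum.inr v) = d (Sum.inl u) + d (Sum.inr v) := by
    intro u v
    obtain ⟨i, j, rfl, rfl⟩ := exists_sub_add_eq hodd u v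
    have := congrFun (congrFun h i) j
    simp only [dihedralSum, Matrix.of_apply] at this
    exact_mod_cast this
  have hr : ∀ v, c (Sum.inr v) = d (Sum.inr v) := by
    intro v
    have h0 := key u₀ v
    have h1 := key u₁ v
    omega
  funext x
  rcases x with u | v
  · have h0 := key u 0
    have h1 := hr 0
    omega
  · exact hr v

/-- Every integer matrix in the dilated polytope comes from a normalized integer weight: shift the
least rotation weight over to the reflections. -/
theorem latticePoints_eq_image {n : ℕ} [NeZero n] (hodd : Odd n) {t : ℕ} (ht : 1 ≤ t) :
    {X : Matrix (Fin n) (Fin n) ℝ | X ∈ (t : ℝ) • permPolytope n (dihedralSet n) ∧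
        IsIntegerMatrix X}
      = (fun c : Fin n ⊕ Fin n → ℕ => dihedralSum fun x => (c x : ℝ)) ''
          (normalizedWeights n t) := by
  ext X
  simp only [Set.mem_ofPred_eq, mem_smul_permPolytope ht, Set.mem_image, SetLike.mem_coe]
  constructor
  · rintro ⟨⟨w, hw0, hw1, rfl⟩, hint⟩
    have key : ∀ u v, ∃ z : ℤ, w (Sum.inl u) + w (Sum.inr v) = z := by
      intro u v
      obtain ⟨i, j, rfl, rfl⟩ := exists_sub_add_eq hodd u v
      exact hint i j
    obtain ⟨u₀, hu₀⟩ := Finite.exists_min fun u => w (Sum.inl u)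
    have hnat : ∀ y : ℝ, 0 ≤ y → (∃ z : ℤ, y = z) → ∃ k : ℕ, (k : ℝ) = y := by
      rintro _ hy ⟨z, rfl⟩
      lift z to ℕ using by exact_mod_cast hy
      exact ⟨z, by simp⟩
    have hl : ∀ u, ∃ k : ℕ, (k : ℝ) = w (Sum.inl u) - w (Sum.inl u₀) := by
      refine fun u => hnat _ (sub_nonneg.2 (hu₀ u)) ?_
      obtain ⟨z, hz⟩ := key u 0
      obtain ⟨z₀, hz₀⟩ := key u₀ 0
      exact ⟨z - z₀, by push_cast; linarith⟩
    have hr : ∀ v, ∃ k : ℕ, (k : ℝ) = w (Sum.inr v) + w (Sum.inl u₀) := by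
      refine fun v => hnat _ (add_nonneg (hw0 _) (hw0 _)) ?_
      obtain ⟨z, hz⟩ := key u₀ v
      exact ⟨z, by linarith⟩
    choose a ha using hl
    choose b hb using hr
    refine ⟨Sum.elim a b, mem_normalizedWeights.2 ⟨?_, u₀, ?_⟩, ?_⟩
    · have : ((∑ x, Sum.elim a b x : ℕ) : ℝ) = t := by
        rw [← hw1, Fintype.sum_sum_type, Fintype.sum_sum_type]
        push_cast
        simp only [Sum.elim_inl, Sum.elim_inr, ha, hb, Finset.sum_sub_distrib,
          Finset.sum_add_distrib]
        ring
      exact_mod_cast this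
    · have := ha u₀
      rw [sub_self] at this
      exact_mod_cast this
    · ext i j
      simp only [dihedralSum, Matrix.of_apply, Sum.elim_inl, Sum.elim_inr, ha, hb]
      ring
  · rintro ⟨c, hc, rfl⟩
    refine ⟨⟨_, fun x => Nat.cast_nonneg _, ?_, rfl⟩, fun i j => ?_⟩
    · exact_mod_cast (mem_normalizedWeights.1 hc).1
    · exact ⟨c (Sum.inl (j - i)) + c (Sum.inr (i + j)), by simp [dihedralSum]⟩

/-! ### Counting -/

theorem card_piAntidiag_univ {ι : Type*} [Fintype ι] [DecidableEq ι] [Nonempty ι] (t : ℕ) :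
    (Finset.piAntidiag (Finset.univ : Finset ι) t).card
      = (Fintype.card ι + t - 1).choose (Fintype.card ι - 1) := by
  rw [← Finset.map_sym_eq_piAntidiag, Finset.card_map, Finset.sym_univ, Finset.card_univ,
    Sym.card_sym_eq_choose]
  have := Fintype.card_pos (α := ι)
  exact Nat.choose_symm_of_eq_add (by omega)

/-- Stars and bars; the weights that are not normalized are positive on all `n` rotations, and
lowering these by one leaves an arbitrary weight of total `t - n`. -/
theorem card_normalizedWeights {n : ℕ} (hn : 0 < n) (t : ℕ) :
    (normalizedWeights n t).card + (n + t - 1).choose (2 * n - 1)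
      = (2 * n + t - 1).choose (2 * n - 1) := by
  have : Nonempty (Fin n) := ⟨⟨0, hn⟩⟩
  have hcard : Fintype.card (Fin n ⊕ Fin n) = 2 * n := by simp [two_mul]
  have hA := card_piAntidiag_univ (ι := Fin n ⊕ Fin n) t
  rw [hcard] at hA
  rw [← hA, normalizedWeights, ← Finset.card_filter_add_card_filter_not
    (s := Finset.piAntidiag Finset.univ t) (fun c : Fin n ⊕ Fin n → ℕ => ∃ u, c (Sum.inl u) = 0)]
  congr 1
  let e : Fin n ⊕ Fin n → ℕ := Sum.elim (fun _ => 1) (fun _ => 0)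
  have he : ∑ x, e x = n := by simp [e]
  rcases lt_or_ge t n with htn | htn
  · rw [Nat.choose_eq_zero_of_lt (by omega), eq_comm, Finset.card_eq_zero,
      Finset.filter_eq_empty_iff]
    intro c hc hpos
    push Not at hpos
    have h1 : ∑ x, c x = t := by simpa using hc
    have h2 : ∑ x, e x ≤ ∑ x, c x := Finset.sum_le_sum fun x _ => by
      rcases x with u | v
      · exact Nat.one_le_iff_ne_zero.2 (hpos u)
      · exact Nat.zero_le _
    omega
  · have hB := card_piAntidiag_univ (ι := Fin n ⊕ Fin n) (t - n)
    rw [hcard, show 2 * n + (t - n) - 1 = n + t - 1 by omega] at hB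
    rw [← hB]
    refine Finset.card_bij (fun c _ => c + e) ?_ ?_ ?_
    · intro c hc
      have h1 : ∑ x, c x = t - n := by simpa using hc
      simp only [Finset.mem_filter, Finset.mem_piAntidiag, Pi.add_apply, Finset.sum_add_distrib,
        Finset.mem_univ, implies_true, and_true, not_exists]
      exact ⟨by rw [h1, he]; omega, fun u => by simp [e]⟩
    · intro c _ d _ h
      exact add_right_cancel h
    · intro c hc
      simp only [Finset.mem_filter, Finset.mem_piAntidiag, Finset.mem_univ, implies_true,
        and_true, not_exists] at hc
      have hle : e ≤ c := by
        intro x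
        rcases x with u | v
        · exact Nat.one_le_iff_ne_zero.2 (hc.2 u)
        · exact Nat.zero_le _
      refine ⟨c - e, ?_, tsub_add_cancel_of_le hle⟩
      have h1 : ∑ x, (c - e) x + ∑ x, e x = ∑ x, c x := by
        rw [← Finset.sum_add_distrib]
        exact Finset.sum_congr rfl fun x _ => Nat.sub_add_cancel (hle x)
      simp only [Finset.mem_piAntidiag, Finset.mem_univ, implies_true, and_true]
      change ∑ x, (c - e) x = t - n
      have h2 : ∑ x, c x = t := hc.1
      omega

/-- Vandermonde's identity, with the row `2n - d` of Pascal's triangle read from its other end.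
The values `d = 0` and `d = n` give the two kinds of coefficients in the Ehrhart polynomial. -/
theorem sum_chooseZ {n : ℕ} (hn : 0 < n) (s : ℕ) {d : ℕ} (hd : d ≤ n) :
    ∑ k ∈ Finset.range (2 * n), chooseZ (2 * n - d) ((k : ℤ) + 1 - d) * chooseZ s k
      = ((2 * n - d + s).choose (2 * n - 1) : ℤ) := by
  rw [Nat.add_choose_eq, Finset.Nat.sum_antidiagonal_eq_sum_range_succ_mk,
    ← Finset.sum_range_reflect, show (2 * n - 1).succ = 2 * n by omega]
  push_cast
  refine Finset.sum_congr rfl fun k hk => ?_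
  have hk := Finset.mem_range.1 hk
  have h2 : ∀ l : ℕ, chooseZ s l = s.choose l := fun l => by simp [chooseZ]
  rw [h2]
  congr 1
  unfold chooseZ
  split_ifs with h
  · rw [Nat.cast_inj]
    exact Nat.choose_symm_of_eq_add (by omega)
  · rw [Nat.choose_eq_zero_of_lt (by omega), Nat.cast_zero]

/-- For odd `n > 2` and `t ≥ 1`, the number of integer matrices in `t • P(D_n)` is
`Σ_{k=0}^{2n-2} (C(2n, k+1) − C(n, k+1−n)) C(t−1, k)`. -/
theorem ehrhart_dihedral_odd (n : ℕ) (hn : 2 < n) (hodd : Odd n) (t : ℕ) (ht : 1 ≤ t) :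
    (latticePointCount (permPolytope n (dihedralSet n)) t : ℤ)
      = ∑ k ∈ Finset.range (2 * n - 1),
          (chooseZ (2 * n) ((k : ℤ) + 1) - chooseZ n ((k : ℤ) + 1 - (n : ℤ)))
            * chooseZ (t - 1) (k : ℤ) := by
  have : NeZero n := ⟨by omega⟩
  have hcount : latticePointCount (permPolytope n (dihedralSet n)) t
      = (normalizedWeights n t).card := by
    rw [latticePointCount, latticePoints_eq_image hodd ht, (dihedralSum_injOn hodd t).ncard_image,
      Set.ncard_coe_finset]
  have hcard := card_normalizedWeights (n := n) (by omega) t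
  have h0 := sum_chooseZ (n := n) (by omega) (t - 1) (Nat.zero_le n)
  have h1 := sum_chooseZ (n := n) (by omega) (t - 1) le_rfl
  rw [show 2 * n - 0 + (t - 1) = 2 * n + t - 1 by omega] at h0
  rw [show 2 * n - n + (t - 1) = n + t - 1 by omega, show 2 * n - n = n by omega] at h1
  simp only [Nat.sub_zero, Nat.cast_zero, sub_zero] at h0
  -- The term `k = 2n - 1`, absent from the sum, vanishes because `C(2n, 2n) = C(n, n)`.
  have hlast : (chooseZ (2 * n) (((2 * n - 1 : ℕ) : ℤ) + 1)
      - chooseZ n (((2 * n - 1 : ℕ) : ℤ) + 1 - (n : ℤ))) = 0 := by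
    rw [show ((2 * n - 1 : ℕ) : ℤ) + 1 = ((2 * n : ℕ) : ℤ) by omega,
      show ((2 * n : ℕ) : ℤ) - n = (n : ℤ) by omega]
    simp only [chooseZ, Int.natCast_nonneg, if_true, Int.toNat_natCast, Nat.choose_self, sub_self]
  have hsum := Finset.sum_range_succ (fun k : ℕ =>
    (chooseZ (2 * n) ((k : ℤ) + 1) - chooseZ n ((k : ℤ) + 1 - (n : ℤ)))
      * chooseZ (t - 1) (k : ℤ)) (2 * n - 1)
  rw [hlast, zero_mul, add_zero, show 2 * n - 1 + 1 = 2 * n by omega] at hsum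
  rw [← hsum, hcount]
  simp only [sub_mul, Finset.sum_sub_distrib]
  rw [h0, h1]
  omega
end

section
/- Let n > 2 be even and let λ : D_n → ℝ. Then Σ_{g ∈ D_n} λ(g)·M(g) is the zero matrix if and only if there exist a, b ∈ ℝ such that λ(r^{2j}) = a and λ(r^{2j+1}) = a + b for all j, and λ(f r^{2j}) = −(a+b) and λ(f r^{2j+1}) = −a for all j. (Equivalently, the space of linear dependences among the 2n matrices M(g), g ∈ D_n, is two-dimensional, spanned by the relations Σ_k M(r^k) = Σ_k M(f r^k) and Σ_j M(r^{2j+1}) = Σ_j M(f r^{2j}).) -/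
theorem finRotate_pow_val (n k : ℕ) (i : Fin n) :
    (((finRotate n) ^ k) i : ℕ) = (i + k) % n := by
  obtain _ | m := n
  · exact i.elim0
  induction k with
  | zero => simp [Nat.mod_eq_of_lt i.isLt]
  | succ k ih =>
    rw [pow_succ', Equiv.Perm.mul_apply, finRotate_apply, Fin.val_add, ih]
    simp [add_assoc]

theorem revPerm_mul_finRotate_pow_val (n k : ℕ) (i : Fin n) :
    ((Fin.revPerm * (finRotate n) ^ k : Equiv.Perm (Fin n)) i : ℕ) = n - 1 - (i + k) % n := by
  rw [Equiv.Perm.mul_apply, Fin.revPerm_apply, Fin.val_rev, finRotate_pow_val]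
  omega

theorem finRotate_pow_mod (n k : ℕ) : (finRotate n) ^ (k % n) = (finRotate n) ^ k := by
  ext i
  simp [finRotate_pow_val]

/-- The permutations `s * r ^ k`, `0 ≤ k < n`, are sharply transitive for any fixed `s`, so a
combination of their matrices has a single coefficient in each entry. -/
theorem sum_entry (n : ℕ) (lam : Equiv.Perm (Fin n) → ℝ) (s : Equiv.Perm (Fin n))
    (i j : Fin n) (p : ℕ) (hp : (s * (finRotate n) ^ p) i = j) :
    (∑ k ∈ Finset.range n, lam (s * (finRotate n) ^ k) •
      permMatrix n (s * (finRotate n) ^ k)) i j = lam (s * (finRotate n) ^ p) := by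
  have hn : 0 < n := i.pos
  rw [Matrix.sum_apply, Finset.sum_eq_single (p % n)]
  · rw [finRotate_pow_mod]
    simp only [Matrix.smul_apply, permMatrix, Matrix.of_apply, hp]
    simp
  · intro k hk hne
    have hk : k < n := Finset.mem_range.mp hk
    have h : (s * (finRotate n) ^ k) i ≠ j := by
      intro h
      rw [← hp, Equiv.Perm.mul_apply, Equiv.Perm.mul_apply] at h
      have h := congrArg Fin.val (s.injective h)
      rw [finRotate_pow_val, finRotate_pow_val] at h
      have h' : k % n = p % n := Nat.ModEq.add_left_cancel' (i : ℕ) h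
      exact hne (by rw [← h', Nat.mod_eq_of_lt hk])
    simp only [Matrix.smul_apply, permMatrix, Matrix.of_apply, if_neg h]
    simp
  · intro h
    exact absurd (Finset.mem_range.mpr (Nat.mod_lt p hn)) h

theorem dihedral_entry (n : ℕ) (lam : Equiv.Perm (Fin n) → ℝ) (i j : Fin n) (p q : ℕ)
    (hp : ((finRotate n) ^ p) i = j) (hq : (Fin.revPerm * (finRotate n) ^ q : Equiv.Perm (Fin n)) i = j) :
    ((∑ k ∈ Finset.range n,
        lam ((finRotate n) ^ k) • permMatrix n ((finRotate n) ^ k))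
      + (∑ k ∈ Finset.range n,
          lam (Fin.revPerm * (finRotate n) ^ k) •
            permMatrix n (Fin.revPerm * (finRotate n) ^ k))) i j
      = lam ((finRotate n) ^ p) + lam (Fin.revPerm * (finRotate n) ^ q) := by
  rw [Matrix.add_apply, sum_entry n lam Fin.revPerm i j q hq]
  have := sum_entry n lam 1 i j p (by rwa [one_mul])
  simp only [one_mul] at this
  rw [this]

/-- A rotation `r ^ p` and a reflection `f * r ^ q` with `p + q` odd agree at some point. -/
theorem exists_common_image (n : ℕ) (hn : 2 < n) (heven : Even n) (p q : ℕ)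
    (hpq : Odd (p + q)) :
    ∃ i : Fin n, ((finRotate n) ^ p) i = (Fin.revPerm * (finRotate n) ^ q : Equiv.Perm (Fin n)) i := by
  rw [← finRotate_pow_mod n p, ← finRotate_pow_mod n q]
  have hp : p % n < n := Nat.mod_lt _ (by omega)
  have hq : q % n < n := Nat.mod_lt _ (by omega)
  have hodd : (p % n + q % n) % 2 = 1 := by
    have h1 := Nat.mod_mod_of_dvd p heven.two_dvd
    have h2 := Nat.mod_mod_of_dvd q heven.two_dvd
    have h3 := Nat.odd_iff.mp hpq
    omega
  generalize p % n = p at *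
  generalize q % n = q at *
  -- This `i` solves `(i + p) + (i + q) = 2 n - 1`, so exactly one of the two summands reaches `n`.
  refine ⟨⟨n - (p + q + 1) / 2, by omega⟩, Fin.ext ?_⟩
  rw [finRotate_pow_val, revPerm_mul_finRotate_pow_val]
  dsimp only
  rcases lt_or_ge (n - (p + q + 1) / 2 + p) n with h | h
  · rw [Nat.mod_eq_of_lt h, Nat.mod_eq_sub_mod (by omega), Nat.mod_eq_of_lt (by omega)]
    omega
  · rw [Nat.mod_eq_sub_mod h, Nat.mod_eq_of_lt (by omega), Nat.mod_eq_of_lt (by omega)]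
    omega

/-- For even `n > 2`, a real combination `Σ_{g ∈ D_n} λ(g) M(g)` (the rotations are
`r^k = (finRotate n)^k` and the reflections are `f r^k = Fin.revPerm * (finRotate n)^k`,
`0 ≤ k < n`) vanishes iff there are `a, b ∈ ℝ` with `λ(r^{2j}) = a`, `λ(r^{2j+1}) = a + b`,
`λ(f r^{2j}) = −(a+b)` and `λ(f r^{2j+1}) = −a` for all `j`. -/
theorem dihedral_gale_even (n : ℕ) (hn : 2 < n) (heven : Even n)
    (lam : Equiv.Perm (Fin n) → ℝ) :
    (∑ k ∈ Finset.range n,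
        lam ((finRotate n) ^ k) • permMatrix n ((finRotate n) ^ k))
      + (∑ k ∈ Finset.range n,
          lam (Fin.revPerm * (finRotate n) ^ k) •
            permMatrix n (Fin.revPerm * (finRotate n) ^ k)) = 0
    ↔ ∃ a b : ℝ,
        (∀ j : ℕ, lam ((finRotate n) ^ (2 * j)) = a)
        ∧ (∀ j : ℕ, lam ((finRotate n) ^ (2 * j + 1)) = a + b)
        ∧ (∀ j : ℕ, lam (Fin.revPerm * (finRotate n) ^ (2 * j)) = -(a + b))
        ∧ (∀ j : ℕ, lam (Fin.revPerm * (finRotate n) ^ (2 * j + 1)) = -a) := by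
  constructor
  · intro h
    have key : ∀ p q : ℕ, Odd (p + q) →
        lam ((finRotate n) ^ p) + lam (Fin.revPerm * (finRotate n) ^ q) = 0 := by
      intro p q hpq
      obtain ⟨i, hi⟩ := exists_common_image n hn heven p q hpq
      rw [← dihedral_entry n lam i _ p q rfl hi.symm, h, Matrix.zero_apply]
    refine ⟨lam ((finRotate n) ^ 0), lam ((finRotate n) ^ 1) - lam ((finRotate n) ^ 0),
      fun j => ?_, fun j => ?_, fun j => ?_, fun j => ?_⟩
    · linarith [key (2 * j) 1 ⟨j, by ring⟩, key 0 1 ⟨0, by ring⟩]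
    · linarith [key (2 * j + 1) 0 ⟨j, by ring⟩, key 1 0 ⟨0, by ring⟩]
    · linarith [key 1 (2 * j) ⟨j, by ring⟩]
    · linarith [key 0 (2 * j + 1) ⟨j, by ring⟩]
  · rintro ⟨a, b, h1, h2, h3, h4⟩
    ext i j
    have hi := i.isLt
    have hj := j.isLt
    rw [dihedral_entry n lam i j (j + n - i) (2 * n - 1 - i - j), Matrix.zero_apply]
    · obtain ⟨m, hm⟩ := heven
      rcases Nat.even_or_odd' ((j : ℕ) + n - i) with ⟨c, hc | hc⟩
      · obtain ⟨d, hd⟩ : ∃ d, 2 * n - 1 - (i : ℕ) - j = 2 * d + 1 :=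
          ⟨(2 * n - 1 - (i : ℕ) - j) / 2, by omega⟩
        rw [hc, hd, h1, h4]
        ring
      · obtain ⟨d, hd⟩ : ∃ d, 2 * n - 1 - (i : ℕ) - j = 2 * d :=
          ⟨(2 * n - 1 - (i : ℕ) - j) / 2, by omega⟩
        rw [hc, hd, h2, h3]
        ring
    · apply Fin.ext
      rw [finRotate_pow_val, show (i : ℕ) + (j + n - i) = j + n by omega, Nat.add_mod_right,
        Nat.mod_eq_of_lt hj]
    · apply Fin.ext
      rw [revPerm_mul_finRotate_pow_val,
        show (i : ℕ) + (2 * n - 1 - i - j) = (n - 1 - j) + n by omega, Nat.add_mod_right,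
        Nat.mod_eq_of_lt (by omega)]
      omega
end

section
/- Let N be a subgroup of the permutations of Fin n with |N| = n such that every non-identity element of N is fixed-point-free (u(i) ≠ i for all i). Then Σ_{u ∈ N} M(u) = J, the n×n all-ones matrix; consequently, for every permutation g of Fin n, Σ_{u ∈ N} M(u)·M(g) = J. -/
/-!
Two elements `u, v ∈ N` with `u i = v i` give `v⁻¹ * u ∈ N` fixing `i`, so `u = v`. Hence for each
`i` the evaluation map `u ↦ u i` from `N` to `Fin n` is injective, and as both sides have `n`
elements it is bijective: `N` acts regularly (`regular_eval_bijective`). So for each `(i, j)`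
exactly one `u ∈ N` satisfies `u i = j`, which says that the permutation matrices of `N` sum to `J`.
Right multiplication by `M(g)` fixes `J` because every column of `M(g)` sums to `1`.
-/

open scoped BigOperators

/-- A fixed-point-free permutation group of degree and order `n` acts regularly: it is transitive
with trivial point stabilisers. -/
theorem regular_eval_bijective (n : ℕ) (N : Subgroup (Equiv.Perm (Fin n)))
    (hcard : Nat.card N = n)
    (hfree : ∀ u ∈ N, u ≠ 1 → ∀ i : Fin n, u i ≠ i) (i : Fin n) :
    Function.Bijective (fun u : N => (u : Equiv.Perm (Fin n)) i) := by
  classical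
  rw [Fintype.bijective_iff_injective_and_card]
  refine ⟨fun u v huv => ?_, by rw [← Nat.card_eq_fintype_card, hcard, Fintype.card_fin]⟩
  have huv' : (u : Equiv.Perm (Fin n)) i = (v : Equiv.Perm (Fin n)) i := huv
  by_contra hne
  refine hfree _ (v⁻¹ * u).2 (fun h => hne ?_) i ?_
  · have h1 : v⁻¹ * u = 1 := Subtype.ext h
    exact (inv_mul_eq_one.mp h1).symm
  · simp [huv']

/-- If `N` is a subgroup of permutations of `Fin n` of order `n` all of whose non-identity
elements are fixed-point-free, then `Σ_{u ∈ N} M(u) = J`, the all-ones matrix; consequently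
`Σ_{u ∈ N} M(u) M(g) = J` for every permutation `g`. -/
theorem frobenius_kernel_sum_eq_allOnes (n : ℕ) (N : Subgroup (Equiv.Perm (Fin n)))
    (hcard : Nat.card N = n)
    (hfree : ∀ u ∈ N, u ≠ 1 → ∀ i : Fin n, u i ≠ i) :
    (∑ᶠ u ∈ (N : Set (Equiv.Perm (Fin n))), permMatrix n u)
        = Matrix.of (fun _ _ => (1 : ℝ))
    ∧ ∀ g : Equiv.Perm (Fin n),
        (∑ᶠ u ∈ (N : Set (Equiv.Perm (Fin n))), permMatrix n u * permMatrix n g)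
          = Matrix.of (fun _ _ => (1 : ℝ)) := by
  classical
  have hJ : (∑ᶠ u ∈ (N : Set (Equiv.Perm (Fin n))), permMatrix n u)
      = Matrix.of (fun _ _ => (1 : ℝ)) := by
    rw [← finsum_set_coe_eq_finsum_mem]
    change (∑ᶠ u : N, permMatrix n u) = _
    rw [finsum_eq_sum_of_fintype]
    ext i j
    rw [Matrix.sum_apply]
    simp only [permMatrix, Matrix.of_apply]
    rw [(regular_eval_bijective n N hcard hfree i).sum_comp
      (fun k => if k = j then (1 : ℝ) else 0)]
    simp
  refine ⟨hJ, fun g => ?_⟩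
  rw [← finsum_mem_mul' _ _ (Set.toFinite _), hJ]
  ext i j
  simp only [permMatrix, Matrix.mul_apply, Matrix.of_apply, one_mul]
  rw [Equiv.sum_comp g (fun k => if k = j then (1 : ℝ) else 0)]
  simp
end

section
/- Under the Frobenius setup, the dimension of the affine span of the permutation polytope P(G) equals |G| − |H|. -/
/-- A free action of a group of order `n` on `n` points is regular. -/
lemma existsUnique_apply_eq {n : ℕ} {N : Subgroup (Equiv.Perm (Fin n))}
    (hfree : ∀ u ∈ N, u ≠ 1 → ∀ i, u i ≠ i) (hcard : Nat.card N = n) (i j : Fin n) :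
    ∃! u : N, u.1 i = j := by
  classical
  have hinj : Function.Injective (fun u : N => u.1 i) := by
    intro u v huv
    by_contra hne
    refine hfree (v.1⁻¹ * u.1) (N.mul_mem (N.inv_mem v.2) u.2) ?_ i ?_
    · intro h
      exact hne (Subtype.ext (inv_mul_eq_one.mp h).symm)
    · exact Equiv.Perm.inv_eq_iff_eq.mpr huv
  have hbij : Function.Bijective (fun u : N => u.1 i) :=
    (Fintype.bijective_iff_injective_and_card _).mpr
      ⟨hinj, by rw [← Nat.card_eq_fintype_card, hcard, Fintype.card_fin]⟩
  exact hbij.existsUnique j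

open Finset in
/-- Two elements of `G` in different left cosets of `N` agree at exactly one point. -/
lemma card_agree_eq_one {n : ℕ} {G N : Subgroup (Equiv.Perm (Fin n))} (hNG : N ≤ G)
    (hfree : ∀ u ∈ N, u ≠ 1 → ∀ i, u i ≠ i) (hcard : Nat.card N = n)
    (hfix : ∀ g ∈ G, g ∉ N → ∃ i, g i = i) {a g : Equiv.Perm (Fin n)} (ha : a ∈ G) (hg : g ∈ G)
    (hag : a⁻¹ * g ∉ N) : ∑ i, (if g i = a i then (1 : ℝ) else 0) = 1 := by
  classical
  -- The number of agreements of `g` with the elements of the coset `a N`.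
  have hsum : ∑ u : N, ∑ i, (if g i = a (u.1 i) then 1 else 0) = ∑ _u : N, 1 := by
    rw [sum_comm]
    have h1 : ∀ i, ∑ u : N, (if g i = a (u.1 i) then 1 else 0) = 1 := by
      intro i
      obtain ⟨u, hu, huniq⟩ := existsUnique_apply_eq hfree hcard i (a⁻¹ (g i))
      rw [sum_eq_single u]
      · simp [hu]
      · intro v _ hv
        rw [if_neg]
        intro h
        exact hv (huniq v (by simp [h]))
      · simp
    rw [sum_congr rfl fun i _ => h1 i]
    rw [sum_const, sum_const, card_univ, card_univ, ← Nat.card_eq_fintype_card (α := N), hcard,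
      Fintype.card_fin]
  have hle : ∀ u ∈ (univ : Finset N), 1 ≤ ∑ i, (if g i = a (u.1 i) then 1 else 0) := by
    intro u _
    obtain ⟨i, hi⟩ := hfix (u.1⁻¹ * (a⁻¹ * g))
      (G.mul_mem (G.inv_mem (hNG u.2)) (G.mul_mem (G.inv_mem ha) hg))
      (fun h => hag (by simpa using N.mul_mem u.2 h))
    have hi' : g i = a (u.1 i) :=
      Equiv.Perm.inv_eq_iff_eq.mp (Equiv.Perm.inv_eq_iff_eq.mp hi)
    calc 1 = if g i = a (u.1 i) then 1 else 0 := by rw [if_pos hi']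
      _ ≤ _ := single_le_sum (f := fun i => if g i = a (u.1 i) then 1 else 0)
        (fun _ _ => Nat.zero_le _) (mem_univ i)
  have h := (sum_eq_sum_iff_of_le hle).mp hsum.symm 1 (mem_univ _)
  have h' : ∑ i, (if g i = a i then 1 else 0) = 1 := h.symm
  exact_mod_cast h'

/-- The vertices of a left coset of a regular subgroup add up to the all-ones matrix. -/
lemma sum_permMatrix_coset {n : ℕ} {N : Subgroup (Equiv.Perm (Fin n))}
    [Fintype N] (hfree : ∀ u ∈ N, u ≠ 1 → ∀ i, u i ≠ i) (hcard : Nat.card N = n)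
    (a : Equiv.Perm (Fin n)) (i j : Fin n) :
    ∑ u : N, permMatrix n (a * u.1) i j = 1 := by
  classical
  obtain ⟨u, hu, huniq⟩ := existsUnique_apply_eq hfree hcard i (a⁻¹ j)
  rw [Finset.sum_eq_single u]
  · simp [permMatrix, hu]
  · intro v _ hv
    simp only [permMatrix, Matrix.of_apply]
    rw [if_neg]
    intro h
    exact hv (huniq v (by simp [← h]))
  · simp

/-- The common barycentre `J / n` of the vertices in each left coset of the kernel. -/
noncomputable def barycentre (n : ℕ) : Matrix (Fin n) (Fin n) ℝ :=
  Matrix.of fun _ _ => (n : ℝ)⁻¹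

lemma barycentre_eq_sum {n : ℕ} {N : Subgroup (Equiv.Perm (Fin n))}
    [Fintype N] (hfree : ∀ u ∈ N, u ≠ 1 → ∀ i, u i ≠ i) (hcard : Nat.card N = n) :
    barycentre n = ∑ u : N, (n : ℝ)⁻¹ • permMatrix n u.1 := by
  ext i j
  have h := sum_permMatrix_coset hfree hcard 1 i j
  simp only [one_mul] at h
  rw [Matrix.sum_apply]
  simp only [Matrix.smul_apply, smul_eq_mul, ← Finset.mul_sum, h, barycentre, Matrix.of_apply,
    mul_one]

lemma direction_eq_span {n : ℕ} {G N : Subgroup (Equiv.Perm (Fin n))} (hNG : N ≤ G)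
    (hn : n ≠ 0) (hfree : ∀ u ∈ N, u ≠ 1 → ∀ i, u i ≠ i) (hcard : Nat.card N = n) :
    (affineSpan ℝ (permPolytope n (G : Set (Equiv.Perm (Fin n))))).direction
      = Submodule.span ℝ (Set.range fun g : G => permMatrix n g.1 - barycentre n) := by
  classical
  have hb : barycentre n ∈ permPolytope n (G : Set (Equiv.Perm (Fin n))) := by
    rw [barycentre_eq_sum hfree hcard]
    refine (convex_convexHull ℝ _).sum_mem (fun _ _ => by positivity) ?_ fun u _ =>
      subset_convexHull ℝ _ ⟨u.1, hNG u.2, rfl⟩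
    rw [Finset.sum_const, Finset.card_univ, ← Nat.card_eq_fintype_card, hcard, nsmul_eq_mul]
    exact mul_inv_cancel₀ (by exact_mod_cast hn)
  apply le_antisymm
  · rw [permPolytope, affineSpan_convexHull, direction_affineSpan, vectorSpan, Submodule.span_le]
    rintro _ ⟨_, ⟨g, hg, rfl⟩, _, ⟨h, hh, rfl⟩, rfl⟩
    have := Submodule.sub_mem _
      (Submodule.subset_span (R := ℝ) (Set.mem_range_self
        (f := fun g : G => permMatrix n g.1 - barycentre n) ⟨g, hg⟩))
      (Submodule.subset_span (R := ℝ) (Set.mem_range_self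
        (f := fun g : G => permMatrix n g.1 - barycentre n) ⟨h, hh⟩))
    simpa using this
  · rw [Submodule.span_le]
    rintro _ ⟨g, rfl⟩
    exact AffineSubspace.vsub_mem_direction
      (subset_affineSpan ℝ _ (subset_convexHull ℝ _ ⟨g.1, g.2, rfl⟩))
      (subset_affineSpan ℝ _ hb)

open Finset in
/-- A linear relation among the vectors `M(g) - J / n` is constant on left cosets of `N`: its
value at `a` is its average over `a N`. -/
lemma relation_eq_average {n : ℕ} {G N : Subgroup (Equiv.Perm (Fin n))} [Fintype G] (hNG : N ≤ G)
    (hn : n ≠ 0) (hfree : ∀ u ∈ N, u ≠ 1 → ∀ i, u i ≠ i) (hcard : Nat.card N = n)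
    (hfix : ∀ g ∈ G, g ∉ N → ∃ i, g i = i) (c : G → ℝ)
    (hc : ∑ g : G, c g • (permMatrix n g.1 - barycentre n) = 0) (a : G)
    [DecidablePred fun g : G => a.1⁻¹ * g.1 ∈ N] :
    n * c a = ∑ g : G with a.1⁻¹ * g.1 ∈ N, c g := by
  classical
  have hn' : (n : ℝ) ≠ 0 := by exact_mod_cast hn
  have h0 : ∑ i, (∑ g : G, c g • (permMatrix n g.1 - barycentre n)) i (a.1 i) = 0 := by
    rw [hc]; simp
  simp only [Matrix.sum_apply, Matrix.smul_apply, Matrix.sub_apply, permMatrix, barycentre,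
    Matrix.of_apply, smul_eq_mul] at h0
  rw [sum_comm] at h0
  -- The agreement count is `n` at `a`, `0` elsewhere on `a N`, and `1` off `a N`.
  have key : ∀ g : G, ∑ i, c g * ((if g.1 i = a.1 i then (1 : ℝ) else 0) - (n : ℝ)⁻¹)
      = (if g = a then n * c a else 0) - (if a.1⁻¹ * g.1 ∈ N then c g else 0) := by
    intro g
    rw [← mul_sum, sum_sub_distrib]
    have h1 : ∑ _i : Fin n, (n : ℝ)⁻¹ = 1 := by simp [hn']
    rw [h1]
    by_cases hga : g = a
    · subst hga
      simp
      ring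
    · by_cases hN : a.1⁻¹ * g.1 ∈ N
      · have : ∀ i, g.1 i ≠ a.1 i := by
          intro i hi
          refine hfree _ hN ?_ i ?_
          · intro h
            exact hga (Subtype.ext (inv_mul_eq_one.mp h).symm)
          · simp [Equiv.Perm.mul_apply, hi]
        simp [this, hga, hN]
      · rw [card_agree_eq_one hNG hfree hcard hfix a.2 g.2 hN]
        simp [hga, hN]
  rw [sum_congr rfl fun g _ => key g, sum_sub_distrib, sum_ite_eq' univ a] at h0
  rw [sum_filter]
  simp only [mem_univ, if_true] at h0
  linarith

/-- The relations among the vectors `M(g) - J / n` are the functions on `G` that factor through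
`G / N`. -/
lemma ker_eq_range {n : ℕ} {G N : Subgroup (Equiv.Perm (Fin n))} [Fintype G] (hNG : N ≤ G)
    (hn : n ≠ 0) (hfree : ∀ u ∈ N, u ≠ 1 → ∀ i, u i ≠ i) (hcard : Nat.card N = n)
    (hfix : ∀ g ∈ G, g ∉ N → ∃ i, g i = i) :
    LinearMap.ker (Fintype.linearCombination ℝ
        (fun g : G => permMatrix n g.1 - barycentre n))
      = LinearMap.range (LinearMap.funLeft ℝ ℝ
        (QuotientGroup.mk : G → G ⧸ N.subgroupOf G)) := by
  classical
  have hn' : (n : ℝ) ≠ 0 := by exact_mod_cast hn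
  ext c
  simp only [LinearMap.mem_ker, LinearMap.mem_range, Fintype.linearCombination_apply]
  constructor
  · intro hc
    have hconst : ∀ a b : G, (a : G ⧸ N.subgroupOf G) = b → c a = c b := by
      intro a b hab
      rw [QuotientGroup.eq, Subgroup.mem_subgroupOf] at hab
      have hab' : a.1⁻¹ * b.1 ∈ N := by simpa using hab
      have ha := relation_eq_average hNG hn hfree hcard hfix c hc a
      have hb := relation_eq_average hNG hn hfree hcard hfix c hc b
      have hfilter : ∀ g : G, a.1⁻¹ * g.1 ∈ N ↔ b.1⁻¹ * g.1 ∈ N := by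
        intro g
        rw [show a.1⁻¹ * g.1 = (a.1⁻¹ * b.1) * (b.1⁻¹ * g.1) by group]
        exact N.mul_mem_cancel_left hab'
      simp only [hfilter] at ha
      exact mul_left_cancel₀ hn' (ha.trans hb.symm)
    refine ⟨fun q => c q.out, ?_⟩
    ext g
    exact hconst _ _ (QuotientGroup.out_eq' _)
  · rintro ⟨f, rfl⟩
    simp only [LinearMap.funLeft_apply]
    -- Averaging over right translates by `N` replaces each `M(g)` by `J / n`.
    have hshift : ∀ u : N, ∑ g : G, f (g : G ⧸ N.subgroupOf G) • (permMatrix n g.1 - barycentre n)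
        = ∑ g : G, f (g : G ⧸ N.subgroupOf G) •
          (permMatrix n (g.1 * u.1) - barycentre n) := by
      intro u
      rw [← Equiv.sum_comp (Equiv.mulRight (⟨u.1, hNG u.2⟩ : G))]
      refine Finset.sum_congr rfl fun g _ => ?_
      have : ((g * ⟨u.1, hNG u.2⟩ : G) : G ⧸ N.subgroupOf G) = g :=
        QuotientGroup.mk_mul_of_mem g (by simp [Subgroup.mem_subgroupOf])
      simp [this]
    have hsum : (n : ℝ) • ∑ g : G, f (g : G ⧸ N.subgroupOf G) •
        (permMatrix n g.1 - barycentre n) = 0 := by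
      have h1 : ∑ _u : N, ∑ g : G, f (g : G ⧸ N.subgroupOf G) •
          (permMatrix n g.1 - barycentre n) = 0 := by
        rw [Finset.sum_congr rfl fun u _ => hshift u, Finset.sum_comm]
        refine Finset.sum_eq_zero fun g _ => ?_
        rw [← Finset.smul_sum]
        convert smul_zero _
        ext i j
        rw [Matrix.sum_apply]
        simp only [Matrix.sub_apply, Finset.sum_sub_distrib,
          sum_permMatrix_coset hfree hcard g.1 i j]
        simp [barycentre, ← Nat.card_eq_fintype_card, hcard, hn']
      rwa [Finset.sum_const, Finset.card_univ, ← Nat.card_eq_fintype_card, hcard,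
        ← Nat.cast_smul_eq_nsmul ℝ] at h1
    exact (smul_eq_zero.mp hsum).resolve_left hn'

/-- Frobenius setup: `G ≤ S_n` with Frobenius complement `H` and Frobenius kernel `N`.
Then the dimension of the affine span of `P(G)` is `|G| − |H|`. -/
theorem frobenius_polytope_dim (n : ℕ) (G H N : Subgroup (Equiv.Perm (Fin n)))
    (hHG : H ≤ G) (hNG : N ≤ G)
    (hHnontriv : H ≠ ⊥) (hHproper : H ≠ G)
    (hFrob : ∀ x ∈ G, x ∉ H → ∀ g ∈ H, x⁻¹ * g * x ∈ H → g = 1)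
    (hNdef : (N : Set (Equiv.Perm (Fin n)))
      = {1} ∪ {g | g ∈ G ∧ ∀ i : Fin n, g i ≠ i})
    (hNcard : Nat.card N = n)
    (hNH : N ⊓ H = ⊥)
    (hNHprod : ∀ g ∈ G, ∃ u ∈ N, ∃ h ∈ H, g = u * h) :
    Module.finrank ℝ
        (affineSpan ℝ (permPolytope n (G : Set (Equiv.Perm (Fin n))))).direction
      = Nat.card G - Nat.card H := by
  classical
  have hmem : ∀ g, g ∈ N ↔ g = 1 ∨ (g ∈ G ∧ ∀ i : Fin n, g i ≠ i) := by
    intro g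
    rw [← SetLike.mem_coe, hNdef]
    rfl
  have hn : n ≠ 0 := hNcard ▸ Nat.card_pos.ne'
  have hfree : ∀ u ∈ N, u ≠ 1 → ∀ i, u i ≠ i := fun u hu hu1 =>
    (((hmem u).mp hu).resolve_left hu1).2
  have hfix : ∀ g ∈ G, g ∉ N → ∃ i, g i = i := by
    intro g hg hgN
    by_contra! h
    exact hgN ((hmem g).mpr (Or.inr ⟨hg, h⟩))
  have hcardG : Nat.card G = Nat.card N * Nat.card H := by
    rw [← Nat.card_prod]
    refine (Nat.card_congr (Equiv.ofBijective
      (fun p : N × H => (⟨p.1.1 * p.2.1, G.mul_mem (hNG p.1.2) (hHG p.2.2)⟩ : G)) ⟨?_, ?_⟩)).symm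
    · intro p q hpq
      exact Subgroup.mul_injective_of_disjoint (disjoint_iff.mpr hNH) (congrArg Subtype.val hpq)
    · rintro ⟨g, hg⟩
      obtain ⟨u, hu, h, hh, rfl⟩ := hNHprod g hg
      exact ⟨(⟨u, hu⟩, ⟨h, hh⟩), rfl⟩
  have hquot : Nat.card (G ⧸ N.subgroupOf G) = Nat.card H := by
    have h1 := Subgroup.card_eq_card_quotient_mul_card_subgroup (N.subgroupOf G)
    rw [Nat.card_congr (Subgroup.subgroupOfEquivOfLe hNG).toEquiv, hcardG,
      mul_comm (Nat.card N)] at h1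
    exact (Nat.eq_of_mul_eq_mul_right Nat.card_pos h1).symm
  have hrn := LinearMap.finrank_range_add_finrank_ker (Fintype.linearCombination ℝ
    (fun g : G => permMatrix n g.1 - barycentre n))
  rw [ker_eq_range hNG hn hfree hNcard hfix, LinearMap.finrank_range_of_inj
    (LinearMap.funLeft_injective_of_surjective ℝ ℝ _ QuotientGroup.mk_surjective),
    Fintype.range_linearCombination, ← direction_eq_span hNG hn hfree hNcard,
    Module.finrank_fintype_fun_eq_card, Module.finrank_fintype_fun_eq_card,
    ← Nat.card_eq_fintype_card, ← Nat.card_eq_fintype_card, hquot] at hrn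
  omega
end

section
/- Under the Frobenius setup, for a function λ : G → ℝ, Σ_{g ∈ G} λ(g)·M(g) is the zero matrix if and only if λ is constant on each right coset Nx of N in G and Σ_{g ∈ G} λ(g) = 0. -/
/-!
The entry `(i, j)` of `∑ λ(g) M(g)` is `S i j = ∑_{g i = j} λ(g)`. The kernel `N` acts freely on
`Fin n` and has order `n`, so it acts regularly.

If `λ` is constant on the cosets `Nx`, then `S i (u j) = S i j` for `u ∈ N`; by transitivity `S i j`
does not depend on `j`, and therefore `n * S i j = ∑ λ` (`card_mul_entry`). This gives one
implication, and for `λ = 1` it is Burnside's count `∑_{g ∈ G} fix(g) = |G|`. As `fix` is `n` at the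
identity, `0` on the rest of `N` and at least `1` off `N`, the count forces every element of `G`
outside `N` to have exactly one fixed point (`sum_fixed_eq`).

Conversely, if all `S i j` vanish, then `0 = ∑ i, S i (x i) = ∑_g λ(g) fix(g x⁻¹)`, which by the
values of `fix` is `n λ(x)` plus the sum of `λ` over `G ∖ Nx`. Hence `λ(x)` depends only on the
coset `Nx`.
-/

open scoped BigOperators

open Classical in
/-- The elements of a subgroup of `Perm (Fin n)` as a finset. -/
noncomputable def elems {n : ℕ} (G : Subgroup (Equiv.Perm (Fin n))) :
    Finset (Equiv.Perm (Fin n)) :=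
  Finset.univ.filter (· ∈ G)

lemma mem_elems {n : ℕ} {G : Subgroup (Equiv.Perm (Fin n))} {g : Equiv.Perm (Fin n)} :
    g ∈ elems G ↔ g ∈ G := by
  simp [elems]

lemma finsum_mem_subgroup {n : ℕ} {A : Type*} [AddCommMonoid A]
    (G : Subgroup (Equiv.Perm (Fin n))) (f : Equiv.Perm (Fin n) → A) :
    (∑ᶠ g ∈ (G : Set (Equiv.Perm (Fin n))), f g) = ∑ g ∈ elems G, f g := by
  rw [← finsum_mem_coe_finset]
  congr! 3
  simp [mem_elems]

/-- A subgroup of order `n` whose nonidentity elements have no fixed point is transitive. -/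
lemma exists_mem_apply_eq {n : ℕ} {N : Subgroup (Equiv.Perm (Fin n))}
    (hfree : ∀ u ∈ N, ∀ i, u i = i → u = 1) (hcard : Nat.card N = n) (i j : Fin n) :
    ∃ u ∈ N, u i = j := by
  have hinj : Function.Injective (fun u : N => u.1 i) := by
    intro u v huv
    have h := hfree (v.1⁻¹ * u.1) (N.mul_mem (N.inv_mem v.2) u.2) i
      (by simp only [Equiv.Perm.mul_apply]; rw [show u.1 i = v.1 i from huv]; simp)
    exact Subtype.ext (inv_mul_eq_one.mp h).symm
  have hbij := (Nat.bijective_iff_injective_and_card _).mpr ⟨hinj, by simpa using hcard⟩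
  obtain ⟨u, hu⟩ := hbij.2 j
  exact ⟨u.1, u.2, hu⟩

/-- If `lam` is constant on the cosets `Nx` in `G`, and `N` is transitive, then every entry of
`∑ lam(g) M(g)` is the average `(∑ lam) / n`. -/
lemma card_mul_entry {n : ℕ} {G N : Subgroup (Equiv.Perm (Fin n))} (hNG : N ≤ G)
    (htrans : ∀ i j : Fin n, ∃ u ∈ N, u i = j) (lam : Equiv.Perm (Fin n) → ℝ)
    (hlam : ∀ x ∈ G, ∀ u ∈ N, lam (u * x) = lam x) (i j : Fin n) :
    n * (∑ g ∈ elems G, if g i = j then lam g else 0) = ∑ g ∈ elems G, lam g := by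
  have hconst : ∀ k, (∑ g ∈ elems G, if g i = k then lam g else 0)
      = ∑ g ∈ elems G, if g i = j then lam g else 0 := by
    intro k
    obtain ⟨u, hu, rfl⟩ := htrans j k
    symm
    refine Finset.sum_bij (fun g _ => u * g) ?_ ?_ ?_ ?_
    · intro g hg
      exact mem_elems.mpr (G.mul_mem (hNG hu) (mem_elems.mp hg))
    · intro a _ b _ h
      exact mul_left_cancel h
    · intro g hg
      exact ⟨u⁻¹ * g, mem_elems.mpr (G.mul_mem (G.inv_mem (hNG hu)) (mem_elems.mp hg)), by simp⟩
    · intro g hg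
      simp [hlam g (mem_elems.mp hg) u hu]
  calc n * (∑ g ∈ elems G, if g i = j then lam g else 0)
      = ∑ k, ∑ g ∈ elems G, if g i = k then lam g else 0 := by simp [hconst]
    _ = ∑ g ∈ elems G, lam g := by
      rw [Finset.sum_comm]
      simp

open Classical in
/-- The number of fixed points of `g ∈ G`: it is `n` at the identity, `0` on the rest of `N`, and
exactly `1` off `N`. The last value follows from Burnside's count, since `1` is a lower bound. -/
lemma sum_fixed_eq {n : ℕ} {G N : Subgroup (Equiv.Perm (Fin n))} (hNG : N ≤ G)
    (hfree : ∀ u ∈ N, ∀ i, u i = i → u = 1) (hcard : Nat.card N = n)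
    (hfix : ∀ g ∈ G, g ∉ N → ∃ i, g i = i) {g : Equiv.Perm (Fin n)} (hg : g ∈ G) :
    (∑ i, if g i = i then (1 : ℝ) else 0)
      = if g ∈ N then (if g = 1 then (n : ℝ) else 0) else 1 := by
  have hle : ∀ g ∈ elems G, (if g ∈ N then (if g = 1 then (n : ℝ) else 0) else 1)
      ≤ ∑ i, if g i = i then (1 : ℝ) else 0 := by
    intro g hg
    split_ifs with h1 h2
    · simp [h2]
    · positivity
    · obtain ⟨i, hi⟩ := hfix g (mem_elems.mp hg) h1
      calc (1 : ℝ) = if g i = i then (1 : ℝ) else 0 := by simp [hi]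
        _ ≤ _ := Finset.single_le_sum (f := fun i => if g i = i then (1 : ℝ) else 0)
          (fun _ _ => by positivity) (Finset.mem_univ i)
  have hpos : (n : ℝ) ≠ 0 := by
    rw [← hcard]
    exact_mod_cast Nat.card_pos.ne'
  have hburnside : (∑ g ∈ elems G, ∑ i, if g i = i then (1 : ℝ) else 0) = (elems G).card := by
    rw [Finset.sum_comm]
    have h : ∀ i : Fin n, (∑ g ∈ elems G, if g i = i then (1 : ℝ) else 0)
        = (elems G).card / n := by
      intro i
      rw [eq_div_iff hpos, mul_comm,
        card_mul_entry hNG (exists_mem_apply_eq hfree hcard) (fun _ => 1) (by simp) i i]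
      simp
    simp only [h, Finset.sum_const, Finset.card_univ, Fintype.card_fin, nsmul_eq_mul]
    field_simp
  have hNelems : (elems G).filter (· ∈ N) = elems N := by
    ext g
    simp only [Finset.mem_filter, mem_elems]
    exact ⟨fun h => h.2, fun h => ⟨hNG h, h⟩⟩
  have hNcard : (elems N).card = n := by
    refine Eq.trans ?_ hcard
    rw [Nat.card_eq_fintype_card, Fintype.card_subtype]
    rfl
  have hsum : (∑ g ∈ elems G, if g ∈ N then (if g = 1 then (n : ℝ) else 0) else 1)
      = (elems G).card := by
    have hsplit := Finset.card_filter_add_card_filter_not (s := elems G) (· ∈ N)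
    rw [hNelems, hNcard] at hsplit
    rw [Finset.sum_ite, hNelems, Finset.sum_ite_eq', if_pos (mem_elems.mpr N.one_mem), ← hsplit]
    simp
  exact ((Finset.sum_eq_sum_iff_of_le hle).mp (hsum.trans hburnside.symm) g
    (mem_elems.mpr hg)).symm

/-- Frobenius setup: `G ≤ S_n` with Frobenius complement `H` and Frobenius kernel `N`.
For `λ : G → ℝ`, `Σ_{g ∈ G} λ(g) M(g) = 0` iff `λ` is constant on each right coset `Nx`
of `N` in `G` and `Σ_{g ∈ G} λ(g) = 0`. -/
theorem frobenius_linear_dependences (n : ℕ) (G H N : Subgroup (Equiv.Perm (Fin n)))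
    (hHG : H ≤ G) (hNG : N ≤ G)
    (hHnontriv : H ≠ ⊥) (hHproper : H ≠ G)
    (hFrob : ∀ x ∈ G, x ∉ H → ∀ g ∈ H, x⁻¹ * g * x ∈ H → g = 1)
    (hNdef : (N : Set (Equiv.Perm (Fin n)))
      = {1} ∪ {g | g ∈ G ∧ ∀ i : Fin n, g i ≠ i})
    (hNcard : Nat.card N = n)
    (hNH : N ⊓ H = ⊥)
    (hNHprod : ∀ g ∈ G, ∃ u ∈ N, ∃ h ∈ H, g = u * h)
    (lam : Equiv.Perm (Fin n) → ℝ) :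
    (∑ᶠ g ∈ (G : Set (Equiv.Perm (Fin n))), lam g • permMatrix n g) = 0
      ↔ (∀ x ∈ G, ∀ u ∈ N, lam (u * x) = lam x)
          ∧ (∑ᶠ g ∈ (G : Set (Equiv.Perm (Fin n))), lam g) = 0 := by
  classical
  have hmem : ∀ g, g ∈ N ↔ g = 1 ∨ (g ∈ G ∧ ∀ i : Fin n, g i ≠ i) := by
    intro g
    rw [← SetLike.mem_coe, hNdef]
    rfl
  have hfree : ∀ u ∈ N, ∀ i, u i = i → u = 1 := by
    intro u hu i hi
    exact ((hmem u).mp hu).resolve_right fun h => h.2 i hi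
  have hfix : ∀ g ∈ G, g ∉ N → ∃ i, g i = i := by
    intro g hg hgN
    by_contra! h
    exact hgN ((hmem g).mpr (Or.inr ⟨hg, h⟩))
  have hpos : (n : ℝ) ≠ 0 := by
    rw [← hNcard]
    exact_mod_cast Nat.card_pos.ne'
  rw [finsum_mem_subgroup, finsum_mem_subgroup]
  have hentry : (∑ g ∈ elems G, lam g • permMatrix n g) = 0
      ↔ ∀ i j, (∑ g ∈ elems G, if g i = j then lam g else 0) = 0 := by
    rw [← Matrix.ext_iff]
    simp [Matrix.sum_apply, permMatrix]
  rw [hentry]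
  constructor
  · intro hS
    constructor
    · have key : ∀ x ∈ G, (∑ g ∈ elems G, lam g *
          (if g * x⁻¹ ∈ N then (if g * x⁻¹ = 1 then (n : ℝ) else 0) else 1)) = 0 := by
        intro x hx
        have h0 : (∑ i, ∑ g ∈ elems G, if g i = x i then lam g else 0) = 0 :=
          Finset.sum_eq_zero fun i _ => hS i (x i)
        rw [Finset.sum_comm] at h0
        refine Eq.trans ?_ h0
        refine Finset.sum_congr rfl fun g hg => ?_
        rw [← sum_fixed_eq hNG hfree hNcard hfix (G.mul_mem (mem_elems.mp hg) (G.inv_mem hx)),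
          ← Equiv.sum_comp x, Finset.mul_sum]
        simp
      intro x hx u hu
      have hux : u * x ∈ G := G.mul_mem (hNG hu) hx
      have hdiff : (∑ g ∈ elems G, ((if g = u * x then n * lam g else 0)
          - (if g = x then n * lam g else 0))) = 0 := by
        refine Eq.trans ?_ (sub_eq_zero.mpr ((key _ hux).trans (key x hx).symm))
        rw [← Finset.sum_sub_distrib]
        refine Finset.sum_congr rfl fun g _ => ?_
        have hiff : g * (u * x)⁻¹ ∈ N ↔ g * x⁻¹ ∈ N := by
          rw [mul_inv_rev, ← mul_assoc]
          exact N.mul_mem_cancel_right (N.inv_mem hu)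
        simp only [hiff, mul_inv_eq_one]
        by_cases hgN : g * x⁻¹ ∈ N
        · simp only [hgN, if_true, mul_ite, mul_zero, mul_comm]
        · have h1 : g ≠ x := by
            rintro rfl
            simp at hgN
          have h2 : g ≠ u * x := by
            rintro rfl
            simp [hu] at hgN
          simp [hgN, h1, h2]
      rw [Finset.sum_sub_distrib, Finset.sum_ite_eq', Finset.sum_ite_eq',
        if_pos (mem_elems.mpr hux), if_pos (mem_elems.mpr hx), ← mul_sub] at hdiff
      exact sub_eq_zero.mp ((mul_eq_zero.mp hdiff).resolve_left hpos)
    · -- the entries of any one row add up to `∑ lam`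
      have i : Fin n := ⟨0, Nat.pos_of_ne_zero (by exact_mod_cast hpos)⟩
      have h0 : (∑ j, ∑ g ∈ elems G, if g i = j then lam g else 0) = 0 :=
        Finset.sum_eq_zero fun j _ => hS i j
      rw [Finset.sum_comm] at h0
      simpa using h0
  · rintro ⟨hlam, hsum⟩ i j
    have h := card_mul_entry hNG (exists_mem_apply_eq hfree hNcard) lam hlam i j
    rw [hsum] at h
    exact (mul_eq_zero.mp h).resolve_left hpos
end

section
/- Under the Frobenius setup, let φ be the ℂ-algebra homomorphism from the polynomial ring ℂ[x_g : g ∈ G] to the polynomial ring ℂ[t_{ij} : 1 ≤ i, j ≤ n] determined by φ(x_g) = ∏_{i=1}^n t_{i, g(i)}. Then the kernel of φ equals the ideal generated by the binomials ∏_{g ∈ C} x_g − ∏_{g ∈ C'} x_g, where C and C' range over the right cosets of N in G. -/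
/-!
The kernel `N` acts regularly on the `n` points and every element of `G` is uniquely `u * h` with
`u ∈ N`, `h ∈ H`. Hence `∑_g fix(g) = |G|`; the identity contributes `n`, the rest of `N`
contributes `0`, and each element outside `N` contributes at least `1`, so each of the latter has
exactly one fixed point (`card_fixed_eq`).

A homomorphism sending monomials to monomials has its kernel contained in any ideal containing the
differences of monomials with equal image (`ker_le_of_monomial`). Two exponent vectors `a`, `b` have
equal image under `φ` iff `d = a - b` satisfies `∑_{g i = j} d g = 0` for all `i, j`. Summing this
over the pairs `(i, h i)` gives `∑_g d g * fix(h⁻¹ g) = 0`, that is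
`n * d h + ∑_{g ∉ h N} d g = 0`, so `d` is constant on the cosets of `N` (`const_on_cosets`), and so
are its positive and negative parts. Modulo the binomial ideal all coset products coincide, so a
monomial with coset-constant exponents depends only on its degree (`prod_pow_of_const`); the positive
and negative parts of `d` have the same degree, hence the binomial lies in the ideal.
Conversely every coset product maps to `∏_{i,j} t_{ij}`, by regularity of `N`.
-/

open scoped BigOperators

/-- The kernel of a homomorphism that carries monomials to monomials lies in every ideal containing
the differences of monomials with equal image: the quotient map by `I` factors linearly through `φ`, sending a monomial
in the image of `φ` to the class of an arbitrarily chosen preimage. -/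
lemma ker_le_of_monomial {σ τ : Type*} (φ : MvPolynomial σ ℂ →ₐ[ℂ] MvPolynomial τ ℂ)
    (A : (σ →₀ ℕ) → (τ →₀ ℕ))
    (hA : ∀ a, φ (MvPolynomial.monomial a 1) = MvPolynomial.monomial (A a) 1)
    (I : Ideal (MvPolynomial σ ℂ))
    (hI : ∀ a b, A a = A b →
      (MvPolynomial.monomial a 1 - MvPolynomial.monomial b 1 : MvPolynomial σ ℂ) ∈ I) :
    RingHom.ker (φ : MvPolynomial σ ℂ →+* MvPolynomial τ ℂ) ≤ I := by
  classical
  let ψ : MvPolynomial τ ℂ →ₗ[ℂ] (MvPolynomial σ ℂ ⧸ I) :=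
    (MvPolynomial.basisMonomials τ ℂ).constr ℂ
      (fun e => Ideal.Quotient.mk I (MvPolynomial.monomial (Function.invFun A e) 1))
  have key : ψ ∘ₗ φ.toLinearMap = (Ideal.Quotient.mkₐ ℂ I).toLinearMap := by
    refine (MvPolynomial.basisMonomials σ ℂ).ext fun a => ?_
    have h1 : ψ (MvPolynomial.monomial (A a) 1) =
        Ideal.Quotient.mk I (MvPolynomial.monomial (Function.invFun A (A a)) 1) := by
      have := (MvPolynomial.basisMonomials τ ℂ).constr_basis ℂ
        (fun e => Ideal.Quotient.mk I (MvPolynomial.monomial (Function.invFun A e) 1)) (A a)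
      simpa [ψ] using this
    simp only [MvPolynomial.coe_basisMonomials, LinearMap.comp_apply, AlgHom.toLinearMap_apply,
      hA, h1, Ideal.Quotient.mkₐ_eq_mk]
    exact Ideal.Quotient.eq.2 (hI _ _ (Function.invFun_eq ⟨a, rfl⟩))
  intro f hf
  have hf' : φ f = 0 := hf
  have := LinearMap.congr_fun key f
  simp only [LinearMap.comp_apply, AlgHom.toLinearMap_apply, hf', map_zero,
    Ideal.Quotient.mkₐ_eq_mk] at this
  exact Ideal.Quotient.eq_zero_iff_mem.1 this.symm

/-- `N` is regular: it acts freely, and it has as many elements as there are points. -/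
lemma regular_bijective {n : ℕ} (N : Subgroup (Equiv.Perm (Fin n)))
    (hfree : ∀ u ∈ N, ∀ i, u i = i → u = 1) (hNcard : Nat.card N = n) (i : Fin n) :
    Function.Bijective (fun u : N => (u : Equiv.Perm (Fin n)) i) := by
  classical
  rw [Fintype.bijective_iff_injective_and_card]
  refine ⟨fun u v huv => ?_, by
    rw [← Nat.card_eq_fintype_card, hNcard, Fintype.card_fin]⟩
  have h := hfree (v⁻¹ * u : N) (v⁻¹ * u : N).2 i (by
    simp only at huv
    simp [huv])
  have h2 : (v⁻¹ * u : N) = 1 := Subtype.ext h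
  exact (inv_mul_eq_one.1 h2).symm

lemma mul_bijective {Γ : Type*} [Group Γ] (G H N : Subgroup Γ) (hHG : H ≤ G) (hNG : N ≤ G)
    (hNH : N ⊓ H = ⊥) (hNHprod : ∀ g ∈ G, ∃ u ∈ N, ∃ h ∈ H, g = u * h) :
    Function.Bijective
      (fun p : N × H => (⟨p.1 * p.2, G.mul_mem (hNG p.1.2) (hHG p.2.2)⟩ : G)) := by
  constructor
  · rintro ⟨⟨u, hu⟩, ⟨h, hh⟩⟩ ⟨⟨v, hv⟩, ⟨k, hk⟩⟩ e
    have e : u * h = v * k := congrArg Subtype.val e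
    have e2 : v⁻¹ * u = k * h⁻¹ := by
      rw [inv_mul_eq_iff_eq_mul, ← mul_assoc, eq_mul_inv_iff_mul_eq, e]
    have m : v⁻¹ * u ∈ N ⊓ H :=
      ⟨N.mul_mem (N.inv_mem hv) hu, e2 ▸ H.mul_mem hk (H.inv_mem hh)⟩
    rw [hNH, Subgroup.mem_bot] at m
    have huv : u = v := (inv_mul_eq_one.1 m).symm
    subst huv
    simpa using e
  · rintro ⟨g, hg⟩
    obtain ⟨u, hu, h, hh, rfl⟩ := hNHprod g hg
    exact ⟨(⟨u, hu⟩, ⟨h, hh⟩), rfl⟩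

/-- Number of fixed points of the elements of `G`: `n` for the identity, `0` for the rest of `N`,
and `1` outside `N`. The last value comes from comparing totals over `G`. -/
lemma card_fixed_eq {n : ℕ} (G H N : Subgroup (Equiv.Perm (Fin n)))
    [DecidablePred (· ∈ N)]
    (hHG : H ≤ G) (hNG : N ≤ G) (hNH : N ⊓ H = ⊥)
    (hNHprod : ∀ g ∈ G, ∃ u ∈ N, ∃ h ∈ H, g = u * h)
    (hfree : ∀ u ∈ N, ∀ i, u i = i → u = 1) (hNcard : Nat.card N = n)
    (hfix : ∀ g ∈ G, g ∉ N → ∃ i, g i = i) (g : G) :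
    (∑ i, if (g : Equiv.Perm (Fin n)) i = i then 1 else 0)
      = (if (g : Equiv.Perm (Fin n)) = 1 then n else 0)
        + (if (g : Equiv.Perm (Fin n)) ∈ N then 0 else 1) := by
  classical
  have hb := mul_bijective G H N hHG hNG hNH hNHprod
  have hNc : Fintype.card N = n := by rw [← Nat.card_eq_fintype_card, hNcard]
  have hGc : Fintype.card G = n * Fintype.card H := by
    rw [← Fintype.card_of_bijective hb, Fintype.card_prod, hNc]
  have hle : ∀ g ∈ (Finset.univ : Finset G), (if (g : Equiv.Perm (Fin n)) = 1 then n else 0)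
        + (if (g : Equiv.Perm (Fin n)) ∈ N then 0 else 1)
      ≤ ∑ i, if (g : Equiv.Perm (Fin n)) i = i then 1 else 0 := by
    intro g _
    by_cases h1 : (g : Equiv.Perm (Fin n)) = 1
    · simp [h1, N.one_mem]
    · by_cases h2 : (g : Equiv.Perm (Fin n)) ∈ N
      · simp [h1, h2]
      · obtain ⟨i, hi⟩ := hfix g g.2 h2
        simp only [h1, h2, if_false, zero_add]
        refine le_trans ?_ (Finset.single_le_sum (f := fun i =>
          if (g : Equiv.Perm (Fin n)) i = i then 1 else 0) (fun _ _ => Nat.zero_le _)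
          (Finset.mem_univ i))
        simp [hi]
  have hsum1 : ∑ g : G, ∑ i, (if (g : Equiv.Perm (Fin n)) i = i then 1 else 0)
      = n * Fintype.card H := by
    rw [Finset.sum_comm]
    have : ∀ i : Fin n, ∑ g : G, (if (g : Equiv.Perm (Fin n)) i = i then 1 else 0)
        = Fintype.card H := by
      intro i
      rw [← hb.sum_comp (fun g : G => if (g : Equiv.Perm (Fin n)) i = i then 1 else 0),
        Fintype.sum_prod_type, Finset.sum_comm]
      have : ∀ h : H, ∑ u : N, (if (u : Equiv.Perm (Fin n)) ((h : Equiv.Perm (Fin n)) i) = i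
          then 1 else 0) = 1 := by
        intro h
        rw [(regular_bijective N hfree hNcard ((h : Equiv.Perm (Fin n)) i)).sum_comp
          (fun j => if j = i then 1 else 0)]
        simp
      exact (Finset.sum_congr rfl fun h _ => this h).trans (by simp)
    simp [this]
  have hsum2 : ∑ g : G, ((if (g : Equiv.Perm (Fin n)) = 1 then n else 0)
        + (if (g : Equiv.Perm (Fin n)) ∈ N then 0 else 1)) = n * Fintype.card H := by
    have hc : ∑ g : G, (if (g : Equiv.Perm (Fin n)) ∈ N then 1 else 0) = n := by
      rw [Finset.sum_boole, Nat.cast_id, ← Fintype.card_subtype]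
      refine Eq.trans ?_ hNc
      exact Fintype.card_congr
        ⟨fun g => ⟨g.1.1, g.2⟩, fun u => ⟨⟨u.1, hNG u.2⟩, u.2⟩, fun _ => rfl, fun _ => rfl⟩
    have h1 : ∑ g : G, (if (g : Equiv.Perm (Fin n)) = 1 then n else 0) = n := by
      simp
    have ht : ∑ g : G, (if (g : Equiv.Perm (Fin n)) ∈ N then 1 else 0)
        + ∑ g : G, (if (g : Equiv.Perm (Fin n)) ∈ N then 0 else 1) = n * Fintype.card H := by
      rw [← Finset.sum_add_distrib, ← hGc, ← Finset.card_univ, Finset.card_eq_sum_ones]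
      refine Finset.sum_congr rfl fun g _ => ?_
      split_ifs <;> rfl
    rw [Finset.sum_add_distrib, h1, ← ht, hc]
  exact ((Finset.sum_eq_sum_iff_of_le hle).1 (hsum2.trans hsum1.symm) g (Finset.mem_univ g)).symm

/-- An integral relation among the permutation matrices of `G` is constant on the cosets of `N`:
its pairing with the permutation matrix of `h` reads `n * d h + ∑_{g ∉ h N} d g = 0`, and the
second term depends only on the coset of `h`. -/
lemma const_on_cosets {n : ℕ} (hn : n ≠ 0) (G N : Subgroup (Equiv.Perm (Fin n)))
    [DecidablePred (· ∈ N)] [Fintype G]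
    (hnorm : ∀ g ∈ G, ∀ u ∈ N, g⁻¹ * u * g ∈ N)
    (hF : ∀ g : G, (∑ i, if (g : Equiv.Perm (Fin n)) i = i then 1 else 0)
      = (if (g : Equiv.Perm (Fin n)) = 1 then n else 0)
        + (if (g : Equiv.Perm (Fin n)) ∈ N then 0 else 1))
    (d : G → ℤ)
    (hd : ∀ i j, ∑ g : G, (if (g : Equiv.Perm (Fin n)) i = j then d g else 0) = 0)
    (g h : G) (hgh : ∃ u ∈ N, (g : Equiv.Perm (Fin n)) = u * h) : d g = d h := by
  classical
  have key : ∀ h : G, (n : ℤ) * d h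
      + ∑ g : G, (if ((h⁻¹ * g : G) : Equiv.Perm (Fin n)) ∈ N then 0 else d g) = 0 := by
    intro h
    have h0 : ∑ i, ∑ g : G,
        (if (g : Equiv.Perm (Fin n)) i = (h : Equiv.Perm (Fin n)) i then d g else 0) = 0 :=
      Finset.sum_eq_zero fun i _ => hd i _
    rw [Finset.sum_comm] at h0
    have h1 : ∀ g : G, ∑ i,
        (if (g : Equiv.Perm (Fin n)) i = (h : Equiv.Perm (Fin n)) i then d g else 0)
        = (if g = h then (n : ℤ) * d g else 0)
          + (if ((h⁻¹ * g : G) : Equiv.Perm (Fin n)) ∈ N then 0 else d g) := by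
      intro g
      have e := congrArg (fun k : ℕ => (k : ℤ) * d g) (hF (h⁻¹ * g))
      have c1 : ∀ i, ((h⁻¹ * g : G) : Equiv.Perm (Fin n)) i = i ↔
          (g : Equiv.Perm (Fin n)) i = (h : Equiv.Perm (Fin n)) i := by
        intro i
        rw [Subgroup.coe_mul, Subgroup.coe_inv, Equiv.Perm.mul_apply, Equiv.Perm.inv_eq_iff_eq]
      have c2 : ((h⁻¹ * g : G) : Equiv.Perm (Fin n)) = 1 ↔ g = h := by
        rw [← Subgroup.coe_one G, Subtype.coe_inj, inv_mul_eq_one, eq_comm]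
      simp only [c1, c2] at e
      simp only [Nat.cast_sum, Nat.cast_add, Nat.cast_ite, Nat.cast_one, Nat.cast_zero] at e
      rw [Finset.sum_mul, add_mul] at e
      simpa only [ite_mul, one_mul, zero_mul] using e
    simp only [h1, Finset.sum_add_distrib, Finset.sum_ite_eq', Finset.mem_univ, if_true] at h0
    exact h0
  obtain ⟨u, hu, e⟩ := hgh
  have hc : ∀ k : G, ((g⁻¹ * k : G) : Equiv.Perm (Fin n)) ∈ N ↔
      ((h⁻¹ * k : G) : Equiv.Perm (Fin n)) ∈ N := by
    intro k
    have : ((g⁻¹ * k : G) : Equiv.Perm (Fin n))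
        = ((h : Equiv.Perm (Fin n))⁻¹ * u⁻¹ * h) * ((h⁻¹ * k : G) : Equiv.Perm (Fin n)) := by
      push_cast
      rw [e]
      group
    rw [this]
    exact N.mul_mem_cancel_left (hnorm h h.2 _ (N.inv_mem hu))
  have kg := key g
  simp only [hc] at kg
  have : (n : ℤ) * d g = n * d h := by linarith [key h]
  exact mul_left_cancel₀ (by exact_mod_cast hn) this

/-- If all coset products of a family `x` equal `Y`, a monomial in `x` whose exponents are constant
on cosets is a power of `Y`. The elements of `H` serve as coset representatives. -/
lemma prod_pow_of_const {Γ R : Type*} [Group Γ] [CommMonoid R] (G H N : Subgroup Γ)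
    [Fintype G] [Fintype H] [Fintype N]
    (hHG : H ≤ G) (hNG : N ≤ G)
    (hNH : N ⊓ H = ⊥) (hNHprod : ∀ g ∈ G, ∃ u ∈ N, ∃ h ∈ H, g = u * h)
    (x : G → R) (Y : R)
    (hY : ∀ g : G, ∏ u : N, x ⟨u * g, G.mul_mem (hNG u.2) g.2⟩ = Y)
    (p : G → ℕ) (hp : ∀ g h : G, (∃ u ∈ N, (g : Γ) = u * h) → p g = p h) :
    ∃ k : ℕ, ∏ g, x g ^ p g = Y ^ k ∧ ∑ g, p g = Fintype.card N * k := by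
  have hb := mul_bijective G H N hHG hNG hNH hNHprod
  have hc : ∀ (u : N) (h : H), p ⟨u * h, G.mul_mem (hNG u.2) (hHG h.2)⟩ = p ⟨h, hHG h.2⟩ :=
    fun u h => hp _ _ ⟨u, u.2, rfl⟩
  refine ⟨∑ h : H, p ⟨h, hHG h.2⟩, ?_, ?_⟩
  · rw [← hb.prod_comp (fun g => x g ^ p g), Fintype.prod_prod_type, Finset.prod_comm,
      ← Finset.prod_pow_eq_pow_sum]
    refine Finset.prod_congr rfl fun h _ => ?_
    simp only [hc]
    rw [Finset.prod_pow, hY ⟨h, hHG h.2⟩]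
  · rw [← hb.sum_comp p, Fintype.sum_prod_type]
    simp [hc]

/-- The product over the coset `N x`, parametrised by `N`. -/
lemma finprod_coset {Γ R : Type*} [Group Γ] [CommMonoid R] (G N : Subgroup Γ) [Fintype N]
    (hNG : N ≤ G) (f : G → R) (x : G) :
    ∏ᶠ g ∈ {g : G | ∃ u ∈ N, (g : Γ) = u * (x : Γ)}, f g
      = ∏ u : N, f ⟨u * x, G.mul_mem (hNG u.2) x.2⟩ := by
  have hs : {g : G | ∃ u ∈ N, (g : Γ) = u * (x : Γ)}
      = Set.range (fun u : N => (⟨u * x, G.mul_mem (hNG u.2) x.2⟩ : G)) := by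
    ext g
    constructor
    · rintro ⟨u, hu, e⟩
      exact ⟨⟨u, hu⟩, Subtype.ext e.symm⟩
    · rintro ⟨u, rfl⟩
      exact ⟨u, u.2, rfl⟩
  have hinj : Function.Injective (fun u : N => (⟨u * x, G.mul_mem (hNG u.2) x.2⟩ : G)) := by
    intro u v e
    exact Subtype.ext (mul_right_cancel (congrArg Subtype.val e))
  rw [hs, finprod_mem_range hinj, finprod_eq_prod_of_fintype]

/-- Frobenius setup: `G ≤ S_n` with Frobenius complement `H` and Frobenius kernel `N`.
Let `φ : ℂ[x_g : g ∈ G] → ℂ[t_{ij}]` be the algebra homomorphism with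
`φ(x_g) = ∏_i t_{i, g(i)}`.  Then `ker φ` is the ideal generated by the binomials
`∏_{g ∈ Nx} x_g − ∏_{g ∈ Ny} x_g`, where `Nx`, `Ny` range over right cosets of `N` in `G`. -/
theorem frobenius_toric_ideal (n : ℕ) (G H N : Subgroup (Equiv.Perm (Fin n)))
    (hHG : H ≤ G) (hNG : N ≤ G)
    (hHnontriv : H ≠ ⊥) (hHproper : H ≠ G)
    (hFrob : ∀ x ∈ G, x ∉ H → ∀ g ∈ H, x⁻¹ * g * x ∈ H → g = 1)
    (hNdef : (N : Set (Equiv.Perm (Fin n)))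
      = {1} ∪ {g | g ∈ G ∧ ∀ i : Fin n, g i ≠ i})
    (hNcard : Nat.card N = n)
    (hNH : N ⊓ H = ⊥)
    (hNHprod : ∀ g ∈ G, ∃ u ∈ N, ∃ h ∈ H, g = u * h)
    (φ : MvPolynomial G ℂ →ₐ[ℂ] MvPolynomial (Fin n × Fin n) ℂ)
    (hφ : ∀ g : G, φ (MvPolynomial.X g)
      = ∏ i : Fin n, MvPolynomial.X (i, (g : Equiv.Perm (Fin n)) i)) :
    RingHom.ker (φ : MvPolynomial G ℂ →+* MvPolynomial (Fin n × Fin n) ℂ)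
      = Ideal.span
          {q | ∃ x y : G,
            q = (∏ᶠ g ∈ {g : G | ∃ u ∈ N, (g : Equiv.Perm (Fin n)) = u * (x : Equiv.Perm (Fin n))},
                  MvPolynomial.X g)
              - (∏ᶠ g ∈ {g : G | ∃ u ∈ N, (g : Equiv.Perm (Fin n)) = u * (y : Equiv.Perm (Fin n))},
                  MvPolynomial.X g)} := by
  classical
  have hn : n ≠ 0 := by
    rw [← hNcard]
    exact Nat.card_pos.ne'
  have hmem : ∀ g, g ∈ N ↔ g = 1 ∨ (g ∈ G ∧ ∀ i : Fin n, g i ≠ i) := by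
    intro g
    rw [← SetLike.mem_coe, hNdef]
    simp
  have hfree : ∀ u ∈ N, ∀ i, u i = i → u = 1 := by
    intro u hu i hi
    rcases (hmem u).1 hu with h | h
    · exact h
    · exact absurd hi (h.2 i)
  have hfix : ∀ g ∈ G, g ∉ N → ∃ i, g i = i := by
    intro g hg hgN
    by_contra! h
    exact hgN ((hmem g).2 (Or.inr ⟨hg, h⟩))
  have hnorm : ∀ g ∈ G, ∀ u ∈ N, g⁻¹ * u * g ∈ N := by
    intro g hg u hu
    rcases (hmem u).1 hu with rfl | h
    · simp [N.one_mem]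
    · refine (hmem _).2 (Or.inr ⟨G.mul_mem (G.mul_mem (G.inv_mem hg) h.1) hg, fun i hi => ?_⟩)
      rw [Equiv.Perm.mul_apply, Equiv.Perm.mul_apply, Equiv.Perm.inv_eq_iff_eq] at hi
      exact h.2 _ hi
  have hF := card_fixed_eq G H N hHG hNG hNH hNHprod hfree hNcard hfix
  have hNc : Fintype.card N = n := by rw [← Nat.card_eq_fintype_card, hNcard]
  simp only [finprod_coset G N hNG]
  apply le_antisymm
  · -- exponent of the image monomial: the integer matrix `∑ g, a g • (permutation matrix of g)`
    let A : (G →₀ ℕ) → (Fin n × Fin n →₀ ℕ) := fun a =>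
      ∑ g : G, a g • ∑ i, Finsupp.single (i, (g : Equiv.Perm (Fin n)) i) 1
    have hmon : ∀ a : G →₀ ℕ, (MvPolynomial.monomial a 1 : MvPolynomial G ℂ)
        = ∏ g, MvPolynomial.X g ^ a g := by
      intro a
      rw [MvPolynomial.monomial_eq, map_one, one_mul, Finsupp.prod_fintype _ _ (by simp)]
    refine ker_le_of_monomial φ A ?_ _ ?_
    · intro a
      have hφ' : ∀ g : G, φ (MvPolynomial.X g) = MvPolynomial.monomial
          (∑ i, Finsupp.single (i, (g : Equiv.Perm (Fin n)) i) 1) 1 := by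
        intro g
        rw [hφ, MvPolynomial.monomial_sum_one]
        rfl
      rw [hmon, map_prod]
      simp only [A, map_pow, hφ', MvPolynomial.monomial_pow, one_pow]
      rw [MvPolynomial.monomial_sum_one]
    · intro a b hab
      set I : Ideal (MvPolynomial G ℂ) := Ideal.span _ with hI
      have hent : ∀ (a : G →₀ ℕ) i j, A a (i, j)
          = ∑ g : G, if (g : Equiv.Perm (Fin n)) i = j then a g else 0 := by
        intro a i j
        simp only [A, Finsupp.finsetSum_apply, Finsupp.smul_apply, Finsupp.single_apply,
          Prod.mk.injEq, smul_eq_mul]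
        refine Finset.sum_congr rfl fun g _ => ?_
        rw [Finset.sum_eq_single i]
        · simp
        · intro k _ hk
          simp [hk]
        · simp
      have hd : ∀ i j, ∑ g : G, (if (g : Equiv.Perm (Fin n)) i = j then
          ((a g : ℤ) - b g) else 0) = 0 := by
        intro i j
        have e : A a (i, j) = A b (i, j) := by rw [hab]
        rw [hent, hent] at e
        have e' : (∑ g : G, if (g : Equiv.Perm (Fin n)) i = j then (a g : ℤ) else 0)
            = ∑ g : G, if (g : Equiv.Perm (Fin n)) i = j then (b g : ℤ) else 0 := by
          exact_mod_cast e
        rw [← sub_eq_zero, ← Finset.sum_sub_distrib] at e'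
        refine Eq.trans (Finset.sum_congr rfl fun g _ => ?_) e'
        split_ifs <;> simp
      have hconst := const_on_cosets hn G N hnorm hF (fun g => (a g : ℤ) - b g) hd
      have hdeg : ∑ g, ((a g : ℤ) - b g) = 0 := by
        have i₀ : Fin n := ⟨0, Nat.pos_of_ne_zero hn⟩
        have e : ∑ j, ∑ g : G, (if (g : Equiv.Perm (Fin n)) i₀ = j then
          ((a g : ℤ) - b g) else 0) = 0 := Finset.sum_eq_zero fun j _ => hd i₀ j
        rw [Finset.sum_comm] at e
        simpa using e
      let x : G → MvPolynomial G ℂ ⧸ I := fun g => Ideal.Quotient.mk I (MvPolynomial.X g)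
      have hY : ∀ g : G, ∏ u : N, x ⟨u * g, G.mul_mem (hNG u.2) g.2⟩
          = ∏ u : N, x ⟨u * (1 : G), G.mul_mem (hNG u.2) (1 : G).2⟩ := by
        intro g
        simp only [x, ← map_prod]
        exact Ideal.Quotient.eq.2 (Ideal.subset_span ⟨g, 1, rfl⟩)
      -- truncated subtraction gives the positive and the negative part of `a - b`
      obtain ⟨k, hk, hk'⟩ := prod_pow_of_const G H N hHG hNG hNH hNHprod x _ hY
        (fun g => a g - b g) (fun g h hgh => by have := hconst g h hgh; omega)
      obtain ⟨l, hl, hl'⟩ := prod_pow_of_const G H N hHG hNG hNH hNHprod x _ hY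
        (fun g => b g - a g) (fun g h hgh => by have := hconst g h hgh; omega)
      have hkl : k = l := by
        have e : ∑ g, (a g - b g) = ∑ g, (b g - a g) := by
          zify
          rw [← sub_eq_zero, ← Finset.sum_sub_distrib, ← hdeg]
          refine Finset.sum_congr rfl fun g _ => ?_
          omega
        rw [hk', hl', hNc] at e
        exact Nat.eq_of_mul_eq_mul_left (Nat.pos_of_ne_zero hn) e
      have hsplit : ∀ c d : G →₀ ℕ, Ideal.Quotient.mk I (MvPolynomial.monomial c 1)
          = (∏ g, x g ^ (min (c g) (d g))) * ∏ g, x g ^ (c g - d g) := by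
        intro c d
        rw [hmon, map_prod, ← Finset.prod_mul_distrib]
        refine Finset.prod_congr rfl fun g _ => ?_
        rw [← pow_add, map_pow]
        congr 1
        omega
      refine Ideal.Quotient.eq.1 ?_
      rw [hsplit a b, hsplit b a, hk, hl, hkl]
      simp only [min_comm]
  · rw [Ideal.span_le]
    rintro q ⟨x, y, rfl⟩
    have himg : ∀ x : G, φ (∏ u : N,
        MvPolynomial.X (⟨u * x, G.mul_mem (hNG u.2) x.2⟩ : G))
          = ∏ i : Fin n, ∏ j : Fin n, MvPolynomial.X (i, j) := by
      intro x
      rw [map_prod]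
      simp only [hφ, Equiv.Perm.mul_apply]
      rw [Finset.prod_comm]
      refine Finset.prod_congr rfl fun i _ => ?_
      exact (regular_bijective N hfree hNcard ((x : Equiv.Perm (Fin n)) i)).prod_comp
        (fun j => (MvPolynomial.X (i, j) : MvPolynomial (Fin n × Fin n) ℂ))
    change φ (_ - _) = 0
    rw [map_sub, himg, himg, sub_self]
end

section
/- Under the Frobenius setup, for a subset S ⊆ G, the convex hull of {M(g) : g ∈ S} is a facet of the permutation polytope P(G) if and only if the complement G∖S contains exactly one element from each right coset of N in G (so that |G∖S| = |H|). -/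
/-- The dimension of a polytope: the dimension of its affine span. -/
noncomputable def polytopeDim {E : Type*} [AddCommGroup E] [Module ℝ E] (P : Set E) : ℕ :=
  Module.finrank ℝ (affineSpan ℝ P).direction

/-- `F` is a facet of `P`: `F` is the set of maximizers in `P` of some linear functional
that is non-constant on `P`, and the affine span of `F` has dimension `dim P − 1`. -/
def IsFacet {E : Type*} [AddCommGroup E] [Module ℝ E] (P F : Set E) : Prop :=
  (∃ c : E →ₗ[ℝ] ℝ, (∃ x ∈ P, ∃ y ∈ P, c x ≠ c y)
      ∧ F = {x ∈ P | ∀ y ∈ P, c y ≤ c x})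
  ∧ polytopeDim F + 1 = polytopeDim P

/-- The linear functional `X ↦ ∑ i, X i (h i)`, that is, the entrywise inner product with the
permutation matrix of `h`. On a permutation matrix `M(g)` it counts the `i` with `g i = h i`. -/
noncomputable def agree (n : ℕ) (h : Equiv.Perm (Fin n)) :
    Matrix (Fin n) (Fin n) ℝ →ₗ[ℝ] ℝ where
  toFun X := ∑ i, X i (h i)
  map_add' X Y := by simp [Finset.sum_add_distrib]
  map_smul' r X := by simp [Finset.mul_sum]

lemma agree_permMatrix (n : ℕ) (g h : Equiv.Perm (Fin n)) :
    agree n h (permMatrix n g) = ∑ i, if g i = h i then (1 : ℝ) else 0 := rfl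

/-! ### Convexity and dimension -/

/-- The face of a convex hull on which a linear functional attains its bound `m` is the convex
hull of the generators attaining it. -/
lemma convexHull_face {E : Type*} [AddCommGroup E] [Module ℝ E] (A : Set E) (c : E →ₗ[ℝ] ℝ)
    (m : ℝ) (hA : ∀ a ∈ A, c a ≤ m) :
    {x ∈ convexHull ℝ A | c x = m} = convexHull ℝ {a ∈ A | c a = m} := by
  apply Set.Subset.antisymm
  · have key : convexHull ℝ A ⊆
        {x | c x ≤ m ∧ (c x = m → x ∈ convexHull ℝ {a ∈ A | c a = m})} := by
      refine convexHull_min (fun a ha => ⟨hA a ha, fun h => subset_convexHull ℝ _ ⟨ha, h⟩⟩) ?_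
      rintro x ⟨hx, hx'⟩ y ⟨hy, hy'⟩ a b ha hb hab
      rcases ha.eq_or_lt with rfl | ha
      · obtain rfl : b = 1 := by linarith
        simpa using ⟨hy, hy'⟩
      rcases hb.eq_or_lt with rfl | hb
      · obtain rfl : a = 1 := by linarith
        simpa using ⟨hx, hx'⟩
      have hc : c (a • x + b • y) = a * c x + b * c y := by simp
      have hm : m = a * m + b * m := by rw [← add_mul, hab, one_mul]
      have h1 := mul_le_mul_of_nonneg_left hx ha.le
      have h2 := mul_le_mul_of_nonneg_left hy hb.le
      refine ⟨by linarith, fun h => ?_⟩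
      have e1 : c x = m := mul_left_cancel₀ ha.ne' (by linarith)
      have e2 : c y = m := mul_left_cancel₀ hb.ne' (by linarith)
      exact convex_convexHull ℝ _ (hx' e1) (hy' e2) ha.le hb.le hab
    exact fun x hx => (key hx.1).2 hx.2
  · refine convexHull_min (fun a ha => ⟨subset_convexHull ℝ _ ha.1, ha.2⟩) ?_
    exact (convex_convexHull ℝ A).inter (convex_hyperplane c.isLinear m)

/-- For points on an affine hyperplane missing the origin, the dimension of the affine span is
one less than that of the linear span. -/
lemma polytopeDim_convexHull_add_one {E : Type*} [AddCommGroup E] [Module ℝ E]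
    [FiniteDimensional ℝ E] (A : Set E) (hA : A.Nonempty) (l : E →ₗ[ℝ] ℝ)
    (hl : ∀ a ∈ A, l a = 1) :
    polytopeDim (convexHull ℝ A) + 1 = Module.finrank ℝ (Submodule.span ℝ A) := by
  obtain ⟨a, ha⟩ := hA
  unfold polytopeDim
  rw [affineSpan_convexHull, direction_affineSpan]
  have hker : vectorSpan ℝ A ≤ LinearMap.ker l := by
    rw [vectorSpan_def, Submodule.span_le]
    rintro _ ⟨x, hx, y, hy, rfl⟩
    simp [hl x hx, hl y hy]
  have hsup : vectorSpan ℝ A ⊔ Submodule.span ℝ {a} = Submodule.span ℝ A := by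
    apply le_antisymm
    · refine sup_le ?_ (Submodule.span_mono (by simpa using ha))
      rw [vectorSpan_def, Submodule.span_le]
      rintro _ ⟨x, hx, y, hy, rfl⟩
      exact sub_mem (Submodule.subset_span hx) (Submodule.subset_span hy)
    · rw [Submodule.span_le]
      intro x hx
      have h1 : x - a ∈ vectorSpan ℝ A := vsub_mem_vectorSpan ℝ hx ha
      have h2 : a ∈ Submodule.span ℝ {a} := Submodule.mem_span_singleton_self a
      have := add_mem (Submodule.mem_sup_left (T := Submodule.span ℝ {a}) h1)
        (Submodule.mem_sup_right (S := vectorSpan ℝ A) h2)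
      simpa using this
  have hinf : vectorSpan ℝ A ⊓ Submodule.span ℝ {a} = ⊥ := by
    rw [Submodule.eq_bot_iff]
    rintro x ⟨hx, hx'⟩
    obtain ⟨r, rfl⟩ := Submodule.mem_span_singleton.1 hx'
    have := hker hx
    simp [hl a ha] at this
    simp [this]
  have ha0 : a ≠ 0 := by
    rintro rfl
    simpa using hl 0 ha
  have := Submodule.finrank_sup_add_finrank_inf_eq (vectorSpan ℝ A) (Submodule.span ℝ {a})
  rw [hsup, hinf, finrank_span_singleton ha0] at this
  simpa using this.symm

/-! ### Coincidences of elements of a Frobenius group -/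

section Gram

variable {n : ℕ} {G N : Subgroup (Equiv.Perm (Fin n))}

/-- A fixed-point-free group of order `n` on `n` points acts regularly. -/
lemma kernel_regular (hfree : ∀ u ∈ N, ∀ i, u i = i → u = 1) (hNcard : Nat.card N = n)
    (i j : Fin n) : ∃ u ∈ N, u i = j ∧ ∀ v ∈ N, v i = j → v = u := by
  have hinj : Function.Injective (fun u : N => (u : Equiv.Perm (Fin n)) i) := by
    intro u v huv
    have h := hfree (v⁻¹ * u : N) (v⁻¹ * u).2 i (by
      simp only [Subgroup.coe_mul, Subgroup.coe_inv, Equiv.Perm.mul_apply]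
      rw [Equiv.Perm.inv_eq_iff_eq]
      exact huv)
    have h' : v⁻¹ * u = 1 := Subtype.ext h
    exact (inv_mul_eq_one.1 h').symm
  have hbij := (Nat.bijective_iff_injective_and_card
    (fun u : N => (u : Equiv.Perm (Fin n)) i)).2 ⟨hinj, by simpa using hNcard⟩
  obtain ⟨u, hu⟩ := hbij.2 j
  refine ⟨u, u.2, hu, fun v hv hvj => ?_⟩
  exact congrArg Subtype.val (hinj (a₁ := ⟨v, hv⟩) (a₂ := u) (hvj.trans hu.symm))

open Classical in
/-- The permutation matrices of a right coset of a regular group add up to the all-ones matrix. -/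
lemma coset_sum (hreg : ∀ i j, ∃ u ∈ N, u i = j ∧ ∀ v ∈ N, v i = j → v = u)
    (x : Equiv.Perm (Fin n)) :
    ∑ u with u ∈ N, permMatrix n (u * x) = Matrix.of fun _ _ => (1 : ℝ) := by
  ext i j
  obtain ⟨u, hu, huj, huniq⟩ := hreg (x i) j
  rw [Matrix.sum_apply, Finset.sum_eq_single u]
  · simp [permMatrix, huj]
  · intro v hv hvu
    have : ¬ v (x i) = j := fun h => hvu (huniq v (by simpa using hv) h)
    simp [permMatrix, this]
  · intro h
    simp [hu] at h

open Classical in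
/-- Elements of `G` in distinct cosets of the kernel agree at exactly one point: the elements of
a coset `Nx` agree with the identity `n` times in total, and each of them at least once. -/
lemma agree_of_not_mem (hreg : ∀ i j, ∃ u ∈ N, u i = j ∧ ∀ v ∈ N, v i = j → v = u)
    (hNG : N ≤ G) (hNcard : Nat.card N = n)
    (hfix : ∀ g ∈ G, g ∉ N → ∃ i, g i = i)
    {g h : Equiv.Perm (Fin n)} (hg : g ∈ G) (hh : h ∈ G) (hgh : g * h⁻¹ ∉ N) :
    agree n h (permMatrix n g) = 1 := by
  have hcard : (Finset.univ.filter (· ∈ N)).card = n := by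
    refine Eq.trans ?_ hNcard
    rw [Nat.card_eq_fintype_card, Fintype.card_subtype]
  have hsum : ∑ u with u ∈ N, agree n h (permMatrix n (u * g)) = n := by
    rw [← map_sum, coset_sum hreg]
    simp [agree]
  have hge : ∀ u ∈ Finset.univ.filter (· ∈ N), 1 ≤ agree n h (permMatrix n (u * g)) := by
    intro u hu
    have hu : u ∈ N := by simpa using hu
    have hnot : u * g * h⁻¹ ∉ N := by
      rw [mul_assoc]
      exact fun h' => hgh ((Subgroup.mul_mem_cancel_left _ hu).1 h')
    obtain ⟨i, hi⟩ := hfix _ (mul_mem (mul_mem (hNG hu) hg) (inv_mem hh)) hnot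
    rw [agree_permMatrix]
    have hnn : ∀ k ∈ Finset.univ, (0 : ℝ) ≤ if (u * g) k = h k then (1 : ℝ) else 0 := by
      intro k _
      split_ifs <;> norm_num
    refine le_trans (le_of_eq ?_) (Finset.single_le_sum hnn (Finset.mem_univ (h⁻¹ i)))
    rw [if_pos]
    simpa using hi
  have heq : ∑ u with u ∈ N, (1 : ℝ) = ∑ u with u ∈ N, agree n h (permMatrix n (u * g)) := by
    rw [hsum]
    simp [hcard]
  have := (Finset.sum_eq_sum_iff_of_le hge).1 heq 1 (by simp [one_mem])
  simpa using this.symm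

lemma agree_self (h : Equiv.Perm (Fin n)) : agree n h (permMatrix n h) = n := by
  simp [agree_permMatrix]

lemma agree_of_mem (hfree : ∀ u ∈ N, ∀ i, u i = i → u = 1)
    {g h : Equiv.Perm (Fin n)} (hgh : g * h⁻¹ ∈ N) (hne : g ≠ h) :
    agree n h (permMatrix n g) = 0 := by
  rw [agree_permMatrix]
  refine Finset.sum_eq_zero fun i _ => if_neg fun hi => hne ?_
  exact mul_inv_eq_one.1 (hfree _ hgh (h i) (by simpa using hi))

end Gram

/-! ### Linear relations among permutation matrices -/

section Relations

variable {n : ℕ} {G N : Subgroup (Equiv.Perm (Fin n))}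

open Classical in
/-- A linear relation paired with the permutation matrix of `h`. The sum depends only on the coset
of `h`, so the coefficients of a relation are constant on cosets. -/
lemma relation_coeff
    (h0 : ∀ g h : Equiv.Perm (Fin n), g * h⁻¹ ∈ N → g ≠ h → agree n h (permMatrix n g) = 0)
    (h1 : ∀ g ∈ G, ∀ h ∈ G, g * h⁻¹ ∉ N → agree n h (permMatrix n g) = 1)
    (a : Equiv.Perm (Fin n) → ℝ) (ha : ∑ g with g ∈ G, a g • permMatrix n g = 0)
    (h : Equiv.Perm (Fin n)) (hh : h ∈ G) :
    n * a h + ∑ g with g ∈ G, (if g * h⁻¹ ∈ N then 0 else a g) = 0 := by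
  have key := congrArg (agree n h) ha
  rw [map_sum, map_zero] at key
  have hterm : ∀ g ∈ Finset.univ.filter (· ∈ G), agree n h (a g • permMatrix n g)
      = (if g = h then n * a h else 0) + (if g * h⁻¹ ∈ N then 0 else a g) := by
    intro g hg
    have hg : g ∈ G := by simpa using hg
    rw [map_smul, smul_eq_mul]
    by_cases hgh : g = h
    · subst hgh
      simp [agree_self, mul_comm]
    · by_cases hm : g * h⁻¹ ∈ N
      · simp [h0 g h hm hgh, hgh, hm]
      · simp [h1 g hg h hh hm, hgh, hm]
  rw [Finset.sum_congr rfl hterm, Finset.sum_add_distrib] at key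
  simpa [hh] using key

/-- Permutation matrices of a set missing a point of every coset of the kernel, except possibly
the coset of `t₀`, are linearly independent. -/
lemma linearIndepOn_permMatrix (hn : 2 ≤ n)
    (h0 : ∀ g h : Equiv.Perm (Fin n), g * h⁻¹ ∈ N → g ≠ h → agree n h (permMatrix n g) = 0)
    (h1 : ∀ g ∈ G, ∀ h ∈ G, g * h⁻¹ ∉ N → agree n h (permMatrix n g) = 1)
    (A : Set (Equiv.Perm (Fin n))) (hA : A ⊆ G) (t₀ : Equiv.Perm (Fin n)) (ht₀ : t₀ ∈ G)
    (hmiss : ∀ x ∈ G, x * t₀⁻¹ ∉ N → ∃ t ∈ G, t ∉ A ∧ t * x⁻¹ ∈ N) :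
    LinearIndepOn ℝ (permMatrix n) A := by
  classical
  have hn0 : (n : ℝ) ≠ 0 := by
    have : n ≠ 0 := by omega
    exact_mod_cast this
  rw [← Set.coe_toFinset A, linearIndepOn_finset_iff]
  intro f hf
  set a : Equiv.Perm (Fin n) → ℝ := fun g => if g ∈ A then f g else 0 with ha_def
  have ha : ∑ g with g ∈ G, a g • permMatrix n g = 0 := by
    rw [← hf]
    symm
    apply Finset.sum_subset_zero_on_sdiff
    · intro g hg
      simpa using hA (by simpa using hg)
    · intro g hg
      have : g ∉ A := by simpa using (Finset.mem_sdiff.1 hg).2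
      simp [ha_def, this]
    · intro g hg
      have : g ∈ A := by simpa using hg
      simp [ha_def, this]
  have hrel := relation_coeff h0 h1 a ha
  have hconst : ∀ x ∈ G, ∀ t ∈ G, t * x⁻¹ ∈ N → a x = a t := by
    intro x hx t ht htx
    have e : ∀ g : Equiv.Perm (Fin n), g * x⁻¹ ∈ N ↔ g * t⁻¹ ∈ N := by
      intro g
      have : g * x⁻¹ = g * t⁻¹ * (t * x⁻¹) := by group
      rw [this, Subgroup.mul_mem_cancel_right _ htx]
    have hx' := hrel x hx
    have ht' := hrel t ht
    simp only [e] at hx'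
    exact mul_left_cancel₀ hn0 (by linarith)
  have hout : ∀ x ∈ G, x * t₀⁻¹ ∉ N → a x = 0 := by
    intro x hx hxt
    obtain ⟨t, ht, htA, htx⟩ := hmiss x hx hxt
    rw [hconst x hx t ht htx]
    simp [ha_def, htA]
  have hat : a t₀ = 0 := by
    have := hrel t₀ ht₀
    rw [Finset.sum_eq_zero, add_zero] at this
    · exact (mul_eq_zero.1 this).resolve_left hn0
    · intro g hg
      split_ifs with hm
      · rfl
      · exact hout g (by simpa using hg) hm
  intro g hg
  have hgA : g ∈ A := by simpa using hg
  have hag : a g = 0 := by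
    by_cases hm : g * t₀⁻¹ ∈ N
    · rw [← hconst t₀ ht₀ g (hA hgA) hm, hat]
    · exact hout g (hA hgA) hm
  simpa [ha_def, hgA] using hag

lemma finrank_span_of_linearIndepOn (A : Set (Equiv.Perm (Fin n)))
    (hA : LinearIndepOn ℝ (permMatrix n) A) :
    Module.finrank ℝ (Submodule.span ℝ (permMatrix n '' A)) = A.ncard := by
  classical
  rw [finrank_span_set_eq_card hA.id_image, ← Set.ncard_eq_toFinset_card',
    hA.injOn.ncard_image]

lemma finrank_span_le_ncard (A : Set (Equiv.Perm (Fin n))) :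
    Module.finrank ℝ (Submodule.span ℝ (permMatrix n '' A)) ≤ A.ncard := by
  classical
  refine (finrank_span_le_card _).trans ?_
  rw [← Set.ncard_eq_toFinset_card']
  exact Set.ncard_image_le A.toFinite

lemma polytopeDim_permMatrix (hn : 2 ≤ n) (A : Set (Equiv.Perm (Fin n))) (hA : A.Nonempty) :
    polytopeDim (convexHull ℝ (permMatrix n '' A)) + 1
      = Module.finrank ℝ (Submodule.span ℝ (permMatrix n '' A)) := by
  have hn0 : (n : ℝ) ≠ 0 := by
    have : n ≠ 0 := by omega
    exact_mod_cast this
  refine polytopeDim_convexHull_add_one _ (hA.image _)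
    ((n : ℝ)⁻¹ • ∑ i : Fin n, ∑ j : Fin n, Matrix.entryLinearMap ℝ ℝ i j) ?_
  rintro _ ⟨g, -, rfl⟩
  simp [permMatrix, LinearMap.sum_apply, hn0]

/-- Every permutation matrix of `G` is a vertex of the permutation polytope. -/
lemma mem_of_permMatrix_mem_convexHull (hn : 2 ≤ n)
    (h0 : ∀ g h : Equiv.Perm (Fin n), g * h⁻¹ ∈ N → g ≠ h → agree n h (permMatrix n g) = 0)
    (h1 : ∀ g ∈ G, ∀ h ∈ G, g * h⁻¹ ∉ N → agree n h (permMatrix n g) = 1)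
    (S : Set (Equiv.Perm (Fin n))) (hS : S ⊆ G) (g : Equiv.Perm (Fin n)) (hg : g ∈ G)
    (hmem : permMatrix n g ∈ convexHull ℝ (permMatrix n '' S)) : g ∈ S := by
  by_contra hgS
  have hn' : (2 : ℝ) ≤ n := by exact_mod_cast hn
  have hsub : convexHull ℝ (permMatrix n '' S) ⊆ {X | agree n g X < n} := by
    refine convexHull_min ?_ (convex_halfSpace_lt (agree n g).isLinear _)
    rintro _ ⟨s, hs, rfl⟩
    have hsg : s ≠ g := by
      rintro rfl
      exact hgS hs
    by_cases hm : s * g⁻¹ ∈ N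
    · simp only [Set.mem_ofPred_eq, h0 s g hm hsg]
      linarith
    · simp only [Set.mem_ofPred_eq, h1 s (hS hs) g hg hm]
      linarith
  have := hsub hmem
  simp only [Set.mem_ofPred_eq, agree_self, lt_self_iff_false] at this

end Relations

/-! ### The two implications -/

section Facets

variable {n : ℕ} {G N : Subgroup (Equiv.Perm (Fin n))}

open Classical in
/-- The complement of the vertex set of a proper face meets every coset of the kernel. -/
lemma exists_of_face (hNG : N ≤ G)
    (hreg : ∀ i j, ∃ u ∈ N, u i = j ∧ ∀ v ∈ N, v i = j → v = u)
    (S : Set (Equiv.Perm (Fin n)))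
    (c : Matrix (Fin n) (Fin n) ℝ →ₗ[ℝ] ℝ) (m : ℝ) (hm : ∀ g ∈ G, c (permMatrix n g) ≤ m)
    (hSm : ∀ g ∈ G, g ∈ S ↔ c (permMatrix n g) = m)
    (hnon : ∃ g ∈ G, c (permMatrix n g) ≠ m) (x : Equiv.Perm (Fin n)) (hx : x ∈ G) :
    ∃ t ∈ G, t ∉ S ∧ t * x⁻¹ ∈ N := by
  by_contra! hcon
  obtain ⟨y, hy, hym⟩ := hnon
  have hsum : ∀ z, ∑ u with u ∈ N, c (permMatrix n (u * z)) = c (Matrix.of fun _ _ => (1 : ℝ)) :=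
    fun z => by rw [← map_sum, coset_sum hreg]
  have hle : ∀ u ∈ Finset.univ.filter (· ∈ N), c (permMatrix n (u * y)) ≤ m := by
    intro u hu
    exact hm _ (mul_mem (hNG (by simpa using hu)) hy)
  have hxm : ∑ u with u ∈ N, c (permMatrix n (u * x)) = ∑ u with u ∈ N, m := by
    refine Finset.sum_congr rfl fun u hu => ?_
    have hu : u ∈ N := by simpa using hu
    have huG : u * x ∈ G := mul_mem (hNG hu) hx
    refine (hSm _ huG).1 ?_
    by_contra hnS
    exact hcon _ huG hnS (by simpa using hu)
  have := (Finset.sum_eq_sum_iff_of_le hle).1 (by rw [hsum y, ← hsum x, hxm]) 1 (by simp [one_mem])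
  exact hym (by simpa using this)

open Classical in
lemma transversal_of_isFacet (hn : 2 ≤ n) (hNG : N ≤ G)
    (hreg : ∀ i j, ∃ u ∈ N, u i = j ∧ ∀ v ∈ N, v i = j → v = u)
    (h0 : ∀ g h : Equiv.Perm (Fin n), g * h⁻¹ ∈ N → g ≠ h → agree n h (permMatrix n g) = 0)
    (h1 : ∀ g ∈ G, ∀ h ∈ G, g * h⁻¹ ∉ N → agree n h (permMatrix n g) = 1)
    (S : Set (Equiv.Perm (Fin n))) (hS : S ⊆ G)
    (hF : IsFacet (permPolytope n (G : Set (Equiv.Perm (Fin n))))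
      (convexHull ℝ (permMatrix n '' S))) (x : Equiv.Perm (Fin n)) (hx : x ∈ G) :
    ∃! g, (g ∈ G ∧ g ∉ S) ∧ g * x⁻¹ ∈ N := by
  obtain ⟨⟨c, ⟨p, hp, q, hq, hpq⟩, hFeq⟩, hdim⟩ := hF
  obtain ⟨g₀, hg₀, hmax⟩ := Set.exists_max_image (G : Set (Equiv.Perm (Fin n)))
    (fun g => c (permMatrix n g)) (Set.toFinite _) ⟨1, one_mem G⟩
  have hmP : ∀ X ∈ permPolytope n (G : Set (Equiv.Perm (Fin n))), c X ≤ c (permMatrix n g₀) := by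
    refine convexHull_min ?_ (convex_halfSpace_le c.isLinear _)
    rintro _ ⟨g, hg, rfl⟩
    exact hmax g hg
  have hvert : ∀ g ∈ G, permMatrix n g ∈ permPolytope n (G : Set (Equiv.Perm (Fin n))) :=
    fun g hg => subset_convexHull ℝ _ ⟨g, hg, rfl⟩
  have hSm : ∀ g ∈ G, g ∈ S ↔ c (permMatrix n g) = c (permMatrix n g₀) := by
    intro g hg
    constructor
    · intro hgS
      have hmem : permMatrix n g ∈ convexHull ℝ (permMatrix n '' S) :=
        subset_convexHull ℝ _ ⟨g, hgS, rfl⟩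
      rw [hFeq] at hmem
      exact le_antisymm (hmax g hg) (hmem.2 _ (hvert g₀ hg₀))
    · intro hgm
      refine mem_of_permMatrix_mem_convexHull hn h0 h1 S hS g hg ?_
      rw [hFeq]
      exact ⟨hvert g hg, fun Y hY => hgm ▸ hmP Y hY⟩
  have hnon : ∃ g ∈ G, c (permMatrix n g) ≠ c (permMatrix n g₀) := by
    by_contra! hcon
    have hconst : ∀ X ∈ permPolytope n (G : Set (Equiv.Perm (Fin n))),
        c X = c (permMatrix n g₀) := by
      refine convexHull_min ?_ (convex_hyperplane c.isLinear _)
      rintro _ ⟨g, hg, rfl⟩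
      exact hcon g hg
    exact hpq ((hconst p hp).trans (hconst q hq).symm)
  have hex := exists_of_face hNG hreg S c _ hmax hSm hnon
  obtain ⟨t, htG, htS, htx⟩ := hex x hx
  refine ⟨t, ⟨⟨htG, htS⟩, htx⟩, ?_⟩
  rintro s ⟨⟨hsG, hsS⟩, hsx⟩
  by_contra hst
  have hSne : S.Nonempty := ⟨g₀, (hSm g₀ hg₀).2 rfl⟩
  have hli : LinearIndepOn ℝ (permMatrix n) (insert s (insert t S)) := by
    refine linearIndepOn_permMatrix hn h0 h1 _ ?_ x hx ?_
    · exact Set.insert_subset hsG (Set.insert_subset htG hS)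
    · intro y hy hyx
      obtain ⟨r, hrG, hrS, hry⟩ := hex y hy
      -- the missed point of the coset of `y` is neither `s` nor `t`, which lie in that of `x`
      have hne : ∀ w, w * x⁻¹ ∈ N → r ≠ w := by
        rintro w hw rfl
        apply hyx
        have : y * x⁻¹ = (r * y⁻¹)⁻¹ * (r * x⁻¹) := by group
        rw [this]
        exact mul_mem (inv_mem hry) hw
      exact ⟨r, hrG, by simp [hne s hsx, hne t htx, hrS], hry⟩
  have e1 := finrank_span_of_linearIndepOn _ hli
  rw [Set.ncard_insert_of_notMem (by simp [hst, hsS]), Set.ncard_insert_of_notMem htS] at e1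
  have e2 : Module.finrank ℝ (Submodule.span ℝ (permMatrix n '' insert s (insert t S)))
      ≤ Module.finrank ℝ (Submodule.span ℝ (permMatrix n '' (G : Set (Equiv.Perm (Fin n))))) :=
    Submodule.finrank_mono (Submodule.span_mono (Set.image_mono
      (Set.insert_subset hsG (Set.insert_subset htG hS))))
  have e3 := finrank_span_le_ncard S
  have e4 := polytopeDim_permMatrix hn S hSne
  have e5 := polytopeDim_permMatrix hn (G : Set (Equiv.Perm (Fin n))) ⟨1, one_mem G⟩
  unfold permPolytope at hdim
  omega

open Classical in
lemma isFacet_of_transversal (hn : 2 ≤ n) (hNG : N ≤ G) (hNcard : Nat.card N = n)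
    (hreg : ∀ i j, ∃ u ∈ N, u i = j ∧ ∀ v ∈ N, v i = j → v = u)
    (h0 : ∀ g h : Equiv.Perm (Fin n), g * h⁻¹ ∈ N → g ≠ h → agree n h (permMatrix n g) = 0)
    (h1 : ∀ g ∈ G, ∀ h ∈ G, g * h⁻¹ ∉ N → agree n h (permMatrix n g) = 1)
    (S : Set (Equiv.Perm (Fin n))) (hS : S ⊆ G)
    (hT : ∀ x ∈ G, ∃! g, (g ∈ G ∧ g ∉ S) ∧ g * x⁻¹ ∈ N) :
    IsFacet (permPolytope n (G : Set (Equiv.Perm (Fin n))))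
      (convexHull ℝ (permMatrix n '' S)) := by
  have hn' : (2 : ℝ) ≤ n := by exact_mod_cast hn
  have huniq : ∀ s t, s ∈ G → s ∉ S → t ∈ G → t ∉ S → s * t⁻¹ ∈ N → s = t := by
    intro s t hsG hsS htG htS hst
    exact (hT t htG).unique ⟨⟨hsG, hsS⟩, hst⟩ ⟨⟨htG, htS⟩, by simp [one_mem]⟩
  obtain ⟨t₀, ⟨⟨ht₀G, ht₀S⟩, -⟩, -⟩ := hT 1 (one_mem G)
  have hSnon : S.Nonempty := by
    have : Nontrivial N := (Finite.one_lt_card_iff_nontrivial).1 (by omega)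
    obtain ⟨u, hu⟩ := exists_ne (1 : N)
    refine ⟨u * t₀, ?_⟩
    by_contra hcon
    have := huniq _ t₀ (mul_mem (hNG u.2) ht₀G) hcon ht₀G ht₀S (by simp)
    exact hu (Subtype.ext (by simpa using this))
  set T : Finset (Equiv.Perm (Fin n)) := Finset.univ.filter (fun g => g ∈ G ∧ g ∉ S) with hTdef
  set c : Matrix (Fin n) (Fin n) ℝ →ₗ[ℝ] ℝ := -∑ t ∈ T, agree n t with hc
  have hcval : ∀ g ∈ G, c (permMatrix n g) = (1 - T.card : ℝ) - if g ∈ S then 0 else (n : ℝ) := by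
    intro g hg
    obtain ⟨t, ⟨⟨htG, htS⟩, htg⟩, -⟩ := hT g hg
    have htT : t ∈ T := by simp [hTdef, htG, htS]
    have hgt : g * t⁻¹ ∈ N := by simpa using inv_mem htg
    have hother : ∑ s ∈ T.erase t, agree n s (permMatrix n g) = (T.card : ℝ) - 1 := by
      have : ∀ s ∈ T.erase t, agree n s (permMatrix n g) = 1 := by
        intro s hs
        obtain ⟨hst, hsT⟩ := Finset.mem_erase.1 hs
        obtain ⟨hsG, hsS⟩ : s ∈ G ∧ s ∉ S := by simpa [hTdef] using hsT
        refine h1 g hg s hsG fun hgs => hst (huniq s t hsG hsS htG htS ?_)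
        have : s * t⁻¹ = (g * s⁻¹)⁻¹ * (g * t⁻¹) := by group
        rw [this]
        exact mul_mem (inv_mem hgs) hgt
      rw [Finset.sum_congr rfl this, Finset.sum_const, Finset.card_erase_of_mem htT, nsmul_one,
        Nat.cast_sub (Finset.card_pos.2 ⟨t, htT⟩), Nat.cast_one]
    have hown : agree n t (permMatrix n g) = if g ∈ S then 0 else (n : ℝ) := by
      split_ifs with hgS
      · refine h0 g t hgt ?_
        rintro rfl
        exact htS hgS
      · rw [huniq g t hg hgS htG htS hgt, agree_self]
    rw [hc, LinearMap.neg_apply, LinearMap.sum_apply, ← Finset.add_sum_erase T _ htT, hother, hown]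
    ring
  have hcS : ∀ g ∈ S, c (permMatrix n g) = 1 - T.card := by
    intro g hg
    rw [hcval g (hS hg), if_pos hg, sub_zero]
  have hcT : ∀ g ∈ G, g ∉ S → c (permMatrix n g) < 1 - T.card := by
    intro g hg hgS
    rw [hcval g hg, if_neg hgS]
    linarith
  have hcle : ∀ a ∈ permMatrix n '' (G : Set (Equiv.Perm (Fin n))), c a ≤ 1 - T.card := by
    rintro _ ⟨g, hg, rfl⟩
    by_cases hgS : g ∈ S
    · exact (hcS g hgS).le
    · exact (hcT g hg hgS).le
  have hcleP : ∀ X ∈ permPolytope n (G : Set (Equiv.Perm (Fin n))), c X ≤ 1 - T.card :=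
    convexHull_min hcle (convex_halfSpace_le c.isLinear _)
  have himage : permMatrix n '' S
      = {a ∈ permMatrix n '' (G : Set (Equiv.Perm (Fin n))) | c a = 1 - T.card} := by
    ext X
    constructor
    · rintro ⟨g, hg, rfl⟩
      exact ⟨⟨g, hS hg, rfl⟩, hcS g hg⟩
    · rintro ⟨⟨g, hg, rfl⟩, hgc⟩
      refine ⟨g, ?_, rfl⟩
      by_contra hgS
      exact (hcT g hg hgS).ne hgc
  obtain ⟨s₀, hs₀⟩ := hSnon
  have hvert : ∀ g ∈ G, permMatrix n g ∈ permPolytope n (G : Set (Equiv.Perm (Fin n))) :=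
    fun g hg => subset_convexHull ℝ _ ⟨g, hg, rfl⟩
  refine ⟨⟨c, ⟨_, hvert s₀ (hS hs₀), _, hvert t₀ ht₀G, ?_⟩, ?_⟩, ?_⟩
  · rw [hcS s₀ hs₀]
    exact (hcT t₀ ht₀G ht₀S).ne'
  · rw [himage, ← convexHull_face _ c _ hcle]
    ext X
    constructor
    · rintro ⟨hX, hXc⟩
      exact ⟨hX, fun Y hY => hXc ▸ hcleP Y hY⟩
    · rintro ⟨hX, hXmax⟩
      refine ⟨hX, le_antisymm (hcleP X hX) ?_⟩
      rw [← hcS s₀ hs₀]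
      exact hXmax _ (hvert s₀ (hS hs₀))
  · have hli : LinearIndepOn ℝ (permMatrix n) (insert t₀ S) := by
      refine linearIndepOn_permMatrix hn h0 h1 _ (Set.insert_subset ht₀G hS) t₀ ht₀G ?_
      intro x hx hxt
      obtain ⟨t, ⟨⟨htG, htS⟩, htx⟩, -⟩ := hT x hx
      refine ⟨t, htG, ?_, htx⟩
      have : t ≠ t₀ := by
        rintro rfl
        exact hxt (by simpa using inv_mem htx)
      simp [this, htS]
    have hliS := hli.mono (Set.subset_insert t₀ S)
    have hspan : Submodule.span ℝ (permMatrix n '' (G : Set (Equiv.Perm (Fin n))))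
        = Submodule.span ℝ (permMatrix n '' insert t₀ S) := by
      apply le_antisymm
      · rw [Submodule.span_le]
        rintro _ ⟨t, htG, rfl⟩
        have hmemS : ∀ g ∈ insert t₀ S,
            permMatrix n g ∈ Submodule.span ℝ (permMatrix n '' insert t₀ S) :=
          fun g hg => Submodule.subset_span ⟨g, hg, rfl⟩
        by_cases htS : t ∈ S
        · exact hmemS t (Or.inr htS)
        have htG : t ∈ G := htG
        -- the other elements of the coset of a point outside `S` belong to `S`
        have hin : ∀ r ∈ G, r ∉ S → ∀ u ∈ N, u ≠ 1 → u * r ∈ S := by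
          intro r hrG hrS u hu hu1
          by_contra hcon
          have := huniq _ r (mul_mem (hNG hu) hrG) hcon hrG hrS (by simpa using hu)
          exact hu1 (by simpa using this)
        have hone : (1 : Equiv.Perm (Fin n)) ∈ Finset.univ.filter (· ∈ N) := by simp [one_mem]
        have hJ := coset_sum hreg t
        rw [← coset_sum hreg t₀, ← Finset.add_sum_erase _ _ hone, one_mul] at hJ
        rw [SetLike.mem_coe, eq_sub_of_add_eq hJ]
        refine sub_mem (sum_mem fun u hu => hmemS _ ?_) (sum_mem fun u hu => hmemS _ ?_)
        · have hu : u ∈ N := by simpa using hu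
          by_cases hu1 : u = 1
          · simp [hu1]
          · exact Or.inr (hin t₀ ht₀G ht₀S u hu hu1)
        · obtain ⟨hu1, hu⟩ := Finset.mem_erase.1 hu
          exact Or.inr (hin t htG htS u (by simpa using hu) hu1)
      · exact Submodule.span_mono (Set.image_mono (Set.insert_subset ht₀G hS))
    have e1 := finrank_span_of_linearIndepOn _ hli
    have e2 := finrank_span_of_linearIndepOn _ hliS
    rw [← hspan, Set.ncard_insert_of_notMem ht₀S] at e1
    have e4 := polytopeDim_permMatrix hn S ⟨s₀, hs₀⟩
    have e5 := polytopeDim_permMatrix hn (G : Set (Equiv.Perm (Fin n))) ⟨1, one_mem G⟩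
    unfold permPolytope
    omega

end Facets

/-- Frobenius setup: for `S ⊆ G`, `conv{M(g) : g ∈ S}` is a facet of `P(G)` iff `G∖S`
contains exactly one element from each right coset `Nx` of `N` in `G`. -/
theorem frobenius_facets (n : ℕ) (G H N : Subgroup (Equiv.Perm (Fin n)))
    (hHG : H ≤ G) (hNG : N ≤ G)
    (hHnontriv : H ≠ ⊥) (hHproper : H ≠ G)
    (hFrob : ∀ x ∈ G, x ∉ H → ∀ g ∈ H, x⁻¹ * g * x ∈ H → g = 1)
    (hNdef : (N : Set (Equiv.Perm (Fin n)))
      = {1} ∪ {g | g ∈ G ∧ ∀ i : Fin n, g i ≠ i})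
    (hNcard : Nat.card N = n)
    (hNH : N ⊓ H = ⊥)
    (hNHprod : ∀ g ∈ G, ∃ u ∈ N, ∃ h ∈ H, g = u * h)
    (S : Set (Equiv.Perm (Fin n))) (hS : S ⊆ (G : Set (Equiv.Perm (Fin n)))) :
    IsFacet (permPolytope n (G : Set (Equiv.Perm (Fin n))))
        (convexHull ℝ (permMatrix n '' S))
      ↔ ∀ x ∈ G, ∃! g : Equiv.Perm (Fin n),
          (g ∈ G ∧ g ∉ S) ∧ ∃ u ∈ N, g = u * x := by
  have hmemN : ∀ g : Equiv.Perm (Fin n), g ∈ N ↔ g = 1 ∨ (g ∈ G ∧ ∀ i, g i ≠ i) := by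
    intro g
    rw [← SetLike.mem_coe, hNdef]
    simp
  have hfree : ∀ u ∈ N, ∀ i, u i = i → u = 1 := by
    intro u hu i hi
    exact ((hmemN u).1 hu).resolve_right fun h => h.2 i hi
  have hfix : ∀ g ∈ G, g ∉ N → ∃ i, g i = i := by
    intro g hg hgN
    by_contra! hcon
    exact hgN ((hmemN g).2 (Or.inr ⟨hg, hcon⟩))
  have hn : 2 ≤ n := by
    -- a trivial kernel would force `G = H`
    by_contra hlt
    have hsub : Subsingleton N := by
      have : Nat.card N ≤ 1 := by omega
      exact Finite.card_le_one_iff_subsingleton.1 this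
    refine hHproper (le_antisymm hHG fun g hg => ?_)
    obtain ⟨u, hu, h, hh, rfl⟩ := hNHprod g hg
    have : u = 1 := congrArg Subtype.val (Subsingleton.elim (⟨u, hu⟩ : N) 1)
    simpa [this] using hh
  have hreg := kernel_regular hfree hNcard
  have h0 : ∀ g h : Equiv.Perm (Fin n), g * h⁻¹ ∈ N → g ≠ h → agree n h (permMatrix n g) = 0 :=
    fun g h hm hne => agree_of_mem hfree hm hne
  have h1 : ∀ g ∈ G, ∀ h ∈ G, g * h⁻¹ ∉ N → agree n h (permMatrix n g) = 1 :=
    fun g hg h hh hm => agree_of_not_mem hreg hNG hNcard hfix hg hh hm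
  have hcoset : ∀ x g : Equiv.Perm (Fin n), (∃ u ∈ N, g = u * x) ↔ g * x⁻¹ ∈ N := by
    intro x g
    constructor
    · rintro ⟨u, hu, rfl⟩
      simpa using hu
    · intro h
      exact ⟨g * x⁻¹, h, by simp⟩
  simp only [hcoset]
  exact ⟨fun hF x hx => transversal_of_isFacet hn hNG hreg h0 h1 S hS hF x hx,
    fun hT => isFacet_of_transversal hn hNG hNcard hreg h0 h1 S hS hT⟩
end
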